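/- Let G be a 2-connected simple graph on n vertices. Then the circumference satisfies c(G) ≥ min{ n, ω(G) + δ(G) }, unless G is isomorphic to H(n, ω(G)+δ(G), δ(G)) or to Z(n, ω(G)+δ(G), δ(G)). -/

import Mathlib

open SimpleGraph

/-- The number of edges of a simple graph. -/
noncomputable def edgeCount {V : Type*} (G : SimpleGraph V) : ℕ := G.edgeSet.ncard

/-- `H` occurs as a subgraph of `G` (there is an injective map preserving adjacency). -/
def ContainsCopy {V W : Type*} (G : SimpleGraph V) (H : SimpleGraph W) : Prop :=
  ∃ f : W → V, Function.Injective f ∧ ∀ a b : W, H.Adj a b → G.Adj (f a) (f b)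

/-- The Turán number `ex(n, H)`: the maximum number of edges of an `H`-free
simple graph on `n` vertices. -/
noncomputable def exNum (n : ℕ) {W : Type*} (H : SimpleGraph W) : ℕ :=
  sSup {m | ∃ G : SimpleGraph (Fin n), ¬ ContainsCopy G H ∧ edgeCount G = m}

/-- `h(n,k,a) = C(k-a,2) + a(n-k+a)`. -/
def hFun (n k a : ℕ) : ℕ := (k - a).choose 2 + a * (n - k + a)

/-- `c(n,m,ℓ) = C(m-1,2) + t·C(ℓ-1,2) + C(r,2)` where `n = (m-1) + t(ℓ-1) + r`,
`0 ≤ r < ℓ-1`. -/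
def cFun (n m l : ℕ) : ℕ :=
  (m - 1).choose 2 + ((n - (m - 1)) / (l - 1)) * ((l - 1).choose 2)
    + ((n - (m - 1)) % (l - 1)).choose 2

/-- A graph is 2-connected if it has at least 3 vertices and removing any
single vertex leaves a connected graph. -/
def TwoConnected {V : Type*} [Fintype V] (G : SimpleGraph V) : Prop :=
  3 ≤ Fintype.card V ∧ ∀ v : V, (G.induce ({v}ᶜ : Set V)).Connected

/-- The circumference of a graph: the length of a longest cycle
(`0` if there is no cycle). -/
noncomputable def circumference {V : Type*} (G : SimpleGraph V) : ℕ :=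
  sSup {m | ∃ (v : V) (c : G.Walk v v), c.IsCycle ∧ c.length = m}

/-- The number of neighbours (in `G`) of `x` lying on the walk `p`. -/
noncomputable def degOn {V : Type*} (G : SimpleGraph V) {a b : V} (p : G.Walk a b) (x : V) : ℕ :=
  {v | v ∈ p.support ∧ G.Adj x v}.ncard

/-- The graph obtained from `G` by adding the edge `uv`. -/
def addEdge {V : Type*} (G : SimpleGraph V) (u v : V) : SimpleGraph V :=
  G ⊔ SimpleGraph.fromEdgeSet {s(u, v)}

/-- The minimum degree of a graph (with classical decidability). -/
noncomputable def minDeg {V : Type*} [Fintype V] (G : SimpleGraph V) : ℕ :=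
  @SimpleGraph.minDegree _ G _ (Classical.decRel _)
open SimpleGraph

/-- Membership (as 0-indexed natural) in the set `C` of `H_k(s)`:
`C = {x_{s+1}, x_{s+3}, …, x_{2k-s+1}}` (1-indexed). -/
def inC_HkS (k s i : ℕ) : Prop := s ≤ i ∧ i ≤ 2 * k - s ∧ (i - s) % 2 = 0

/-- Membership in the set `D` of `H_k(s)`: `D = {x_{s+2}, …, x_{2k-s}}` (1-indexed). -/
def inD_HkS (k s i : ℕ) : Prop := s ≤ i ∧ i ≤ 2 * k - s ∧ (i - s) % 2 = 1

/-- The graph `H_k(s)`: the path `x_1 … x_{2k+1}` (here 0-indexed on `Fin (2k+1)`),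
plus all edges inside `A = {x_1,…,x_s}`, all edges inside `B = {x_{2k-s+2},…,x_{2k+1}}`,
and all edges between `A ∪ B` and `C = {x_{s+1}, x_{s+3}, …, x_{2k-s+1}}`. -/
def HkS (k s : ℕ) : SimpleGraph (Fin (2 * k + 1)) :=
  SimpleGraph.fromRel (fun x y =>
    ((y : ℕ) = (x : ℕ) + 1) ∨
    ((x : ℕ) < s ∧ (y : ℕ) < s) ∨
    (2 * k - s + 1 ≤ (x : ℕ) ∧ 2 * k - s + 1 ≤ (y : ℕ)) ∨
    (((x : ℕ) < s ∨ 2 * k - s + 1 ≤ (x : ℕ)) ∧ inC_HkS k s (y : ℕ)))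

/-- Membership in the part `C` (of size `k-1`) of `H_k(M_2)` (0-indexed):
`C = {x_3, x_5, …, x_{2k-1}}` (1-indexed). -/
def inC_HkM2 (k i : ℕ) : Prop := 2 ≤ i ∧ i ≤ 2 * k - 2 ∧ i % 2 = 0

/-- Membership in `D` of `H_k(M_2)` (0-indexed): `D = {x_4, x_6, …, x_{2k-2}}` (1-indexed). -/
def inD_HkM2 (k i : ℕ) : Prop := 3 ≤ i ∧ i ≤ 2 * k - 3 ∧ i % 2 = 1

/-- The graph `H_k(M_2)`: the complete bipartite graph with parts
`C = {x_3,x_5,…,x_{2k-1}}` (size `k-1`) and `A ∪ B ∪ D` (size `k+2`), where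
`A = {x_1,x_2}`, `B = {x_{2k},x_{2k+1}}`, `D = {x_4,…,x_{2k-2}}`, together with the
matching edges `x_1x_2` and `x_{2k}x_{2k+1}` (here 0-indexed on `Fin (2k+1)`). -/
def HkM2 (k : ℕ) : SimpleGraph (Fin (2 * k + 1)) :=
  SimpleGraph.fromRel (fun x y =>
    ((x : ℕ) = 0 ∧ (y : ℕ) = 1) ∨
    ((x : ℕ) = 2 * k - 1 ∧ (y : ℕ) = 2 * k) ∨
    (inC_HkM2 k (x : ℕ) ∧ ¬ inC_HkM2 k (y : ℕ)))

/-- Membership in the part `B = {b_1, …, b_{k-1}}` of `H_k(P_3)`; on `Fin (2k+1)` we take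
`a_1 = 0, a_2 = 1, a_3 = 2`, `B = {3, …, k+1}`, `C = {k+2, …, 2k}`. -/
def inB_HkP3 (k i : ℕ) : Prop := 3 ≤ i ∧ i ≤ k + 1

/-- Membership in the set `C = {c_1, …, c_{k-1}}` of `H_k(P_3)`. -/
def inC_HkP3 (k i : ℕ) : Prop := k + 2 ≤ i ∧ i ≤ 2 * k

/-- The graph `H_k(P_3)`: the complete bipartite graph `K_{k-1,k+2}` with parts
`B = {b_1,…,b_{k-1}}` and `A ∪ C` where `A = {a_1,a_2,a_3}`, `C = {c_1,…,c_{k-1}}`,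
plus the edges `a_1a_2` and `a_2a_3`. Here `a_1 = 0, a_2 = 1, a_3 = 2`,
`B = {3,…,k+1}`, `C = {k+2,…,2k}` on `Fin (2k+1)`. -/
def HkP3 (k : ℕ) : SimpleGraph (Fin (2 * k + 1)) :=
  SimpleGraph.fromRel (fun x y =>
    ((x : ℕ) = 0 ∧ (y : ℕ) = 1) ∨
    ((x : ℕ) = 1 ∧ (y : ℕ) = 2) ∨
    (inB_HkP3 k (x : ℕ) ∧ ¬ inB_HkP3 k (y : ℕ)))

/-- The graph `F_k(t)`: the path `x_1 … x_{2k+t}` (0-indexed on `Fin (2k+t)`), plus all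
edges inside `A = {x_1,…,x_k}`, all edges inside `B = {x_{k+t+1},…,x_{2k+t}}`, all edges
between `x_k` and `B`, and all edges between `x_{k+t+1}` and `A`. -/
def FkT (k t : ℕ) : SimpleGraph (Fin (2 * k + t)) :=
  SimpleGraph.fromRel (fun x y =>
    ((y : ℕ) = (x : ℕ) + 1) ∨
    ((x : ℕ) < k ∧ (y : ℕ) < k) ∨
    (k + t ≤ (x : ℕ) ∧ k + t ≤ (y : ℕ)) ∨
    ((x : ℕ) = k - 1 ∧ k + t ≤ (y : ℕ)) ∨
    ((x : ℕ) = k + t ∧ (y : ℕ) < k))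

/-- The graph `H(n,k,a)`: vertices `{0,…,k-2a-1} = A`, `{k-2a,…,k-a-1} = B`,
`{k-a,…,n-1} = C`; all edges inside `A ∪ B` and all edges between `B` and `C`. -/
def Hgraph (n k a : ℕ) : SimpleGraph (Fin n) :=
  SimpleGraph.fromRel (fun x y =>
    ((x : ℕ) < k - a ∧ (y : ℕ) < k - a) ∨
    (k - 2 * a ≤ (x : ℕ) ∧ (x : ℕ) < k - a ∧ k - a ≤ (y : ℕ)))

/-- The graph `Z(n,k,t)` (for `n = (k-t-2) + ℓ(t-1) + 2`): two universal mutually adjacent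
vertices `0, 1`, a clique `K_{k-t-2}` on `{2,…,k-t-1}`, and consecutive blocks of size
`t-1` on the remaining vertices, each forming a clique `K_{t-1}`. -/
def Zgraph (n k t : ℕ) : SimpleGraph (Fin n) :=
  SimpleGraph.fromRel (fun x y =>
    ((x : ℕ) < 2) ∨ ((y : ℕ) < 2) ∨
    (2 ≤ (x : ℕ) ∧ (x : ℕ) < k - t ∧ 2 ≤ (y : ℕ) ∧ (y : ℕ) < k - t) ∨
    (k - t ≤ (x : ℕ) ∧ k - t ≤ (y : ℕ) ∧
      ((x : ℕ) - (k - t)) / (t - 1) = ((y : ℕ) - (k - t)) / (t - 1)))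

/-! Extend `G` to an edge-maximal graph `H` all of whose cycles have fewer than
`min n (ω + δ)` vertices, and let `K` be a clique of `ω` vertices. By maximality every vertex
outside `K` is the last one of a path of `H` with at least `min n (ω + δ)` vertices that starts
in `K`.

Let `x 0, …, x (m - 1)` be a longest path starting in `K`. Since `H` is 2-connected, there are
`p < q` with `x p` adjacent to `x (m - 1)` and `x q ∈ K`. For a closest such pair, the cycle
`x 0, …, x p, x (m - 1), …, x q` has at least `ω + δ - 1` vertices: the positive indices of the
vertices of `K` and the indices of the successors of the neighbours of `x (m - 1)` are disjoint,
and none of them lies strictly between `p + 1` and `q`. So all the inequalities are tight.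

If `m = ω + δ`, tightness forces the vertices outside `K` to have one common neighbourhood, which
consists of `δ` vertices of `K`, and `H` is `H(n, ω + δ, δ)`. If `m > ω + δ`, they split into
cliques of `δ - 1` vertices that are joined to the same two vertices of `K`, and `H` is
`Z(n, ω + δ, δ)`. In both cases they have degree `δ` in `H`, so `H` has no edges besides those
of `G`. -/

/-- The first `m` terms of `x` are the consecutive vertices of a path of `G`. Paths are sequences
rather than walks so that positions on them can be computed with; the terms of `x` from index `m`
on play no role. -/
structure IsPathSeq {V : Type*} (G : SimpleGraph V) (x : ℕ → V) (m : ℕ) : Prop where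
  inj : ∀ ⦃i j⦄, i < m → j < m → x i = x j → i = j
  adj : ∀ ⦃i⦄, i + 1 < m → G.Adj (x i) (x (i + 1))

/-- The first `m` terms of `x` are the consecutive vertices of a cycle of `G`. -/
structure IsCycleSeq {V : Type*} (G : SimpleGraph V) (x : ℕ → V) (m : ℕ) : Prop
    extends IsPathSeq G x m where
  three_le : 3 ≤ m
  closes : G.Adj (x (m - 1)) (x 0)

/-- `G` has a cycle with `l` vertices. -/
def HasCycle {V : Type*} (G : SimpleGraph V) (l : ℕ) : Prop :=
  ∃ c, IsCycleSeq G c l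

/-- The first `a` terms of `x` followed by the sequence `y`. -/
def catSeq {V : Type*} (x : ℕ → V) (a : ℕ) (y : ℕ → V) : ℕ → V :=
  fun i => if i < a then x i else y (i - a)

section PathSeq

variable {V : Type*} {G : SimpleGraph V} {x y : ℕ → V} {a b m : ℕ}

theorem catSeq_of_lt {i : ℕ} (h : i < a) : catSeq x a y i = x i :=
  if_pos h

theorem catSeq_of_le {i : ℕ} (h : a ≤ i) : catSeq x a y i = y (i - a) :=
  if_neg h.not_gt

theorem catSeq_last (h : 0 < b) : catSeq x a y (a + b - 1) = y (b - 1) := by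
  rw [catSeq_of_le (by omega), show a + b - 1 - a = b - 1 by omega]

namespace IsPathSeq

theorem ne (hx : IsPathSeq G x m) {i j : ℕ} (hi : i < m) (hj : j < m) (h : i ≠ j) : x i ≠ x j :=
  fun e => h (hx.inj hi hj e)

theorem adj_of_succ_eq (hx : IsPathSeq G x m) {i j : ℕ} (hj : j < m) (h : i + 1 = j) :
    G.Adj (x i) (x j) := by
  subst h
  exact hx.adj hj

theorem cat (hx : IsPathSeq G x a) (hy : IsPathSeq G y b)
    (hxy : 0 < a → 0 < b → G.Adj (x (a - 1)) (y 0))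
    (hd : ∀ i < a, ∀ j < b, x i ≠ y j) : IsPathSeq G (catSeq x a y) (a + b) := by
  refine ⟨fun i j hi hj h => ?_, fun i hi => ?_⟩
  · rcases lt_or_ge i a with hia | hia <;> rcases lt_or_ge j a with hja | hja
    · rw [catSeq_of_lt hia, catSeq_of_lt hja] at h
      exact hx.inj hia hja h
    · rw [catSeq_of_lt hia, catSeq_of_le hja] at h
      exact absurd h (hd _ hia _ (by omega))
    · rw [catSeq_of_le hia, catSeq_of_lt hja] at h
      exact absurd h.symm (hd _ hja _ (by omega))
    · rw [catSeq_of_le hia, catSeq_of_le hja] at h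
      have := hy.inj (by omega) (by omega) h
      omega
  · rcases lt_trichotomy (i + 1) a with hia | rfl | hia
    · rw [catSeq_of_lt hia, catSeq_of_lt (by omega)]
      exact hx.adj hia
    · rw [catSeq_of_le le_rfl, catSeq_of_lt (by omega), Nat.sub_self]
      exact hxy (by omega) (by omega)
    · rw [catSeq_of_le (by omega), catSeq_of_le (by omega)]
      exact hy.adj_of_succ_eq (by omega) (by omega)

theorem comp (hx : IsPathSeq G x m) (f : ℕ → ℕ) (hf : ∀ i < a, f i < m)
    (hinj : ∀ i < a, ∀ j < a, f i = f j → i = j)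
    (hadj : ∀ i, i + 1 < a → G.Adj (x (f i)) (x (f (i + 1)))) : IsPathSeq G (fun i => x (f i)) a :=
  ⟨fun i j hi hj e => hinj i hi j hj (hx.inj (hf i hi) (hf j hj) e), fun i hi => hadj i hi⟩

theorem drop (hx : IsPathSeq G x m) (s : ℕ) (h : s + a ≤ m) :
    IsPathSeq G (fun i => x (s + i)) a :=
  hx.comp (s + ·) (by omega) (by omega) fun _ _ => hx.adj_of_succ_eq (by omega) (by omega)

theorem take (hx : IsPathSeq G x m) (h : a ≤ m) : IsPathSeq G x a :=
  hx.comp (fun i => i) (by omega) (by omega) fun _ _ => hx.adj (by omega)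

theorem backwards (hx : IsPathSeq G x m) (s : ℕ) (hs : s < m) (h : a ≤ s + 1) :
    IsPathSeq G (fun i => x (s - i)) a :=
  hx.comp (s - ·) (by omega) (by omega) fun _ _ =>
    (hx.adj_of_succ_eq (by omega) (by omega)).symm

theorem const (v : V) : IsPathSeq G (fun _ => v) 1 :=
  ⟨fun _ _ _ _ _ => by omega, fun _ _ => by omega⟩

theorem length_le_card [Fintype V] (hx : IsPathSeq G x m) : m ≤ Fintype.card V := by
  have hinj : Function.Injective fun i : Fin m => x i :=
    fun i j h => Fin.ext (hx.inj i.2 j.2 h)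
  simpa using Fintype.card_le_of_injective _ hinj

theorem hasCycle_of_chords (hx : IsPathSeq G x m) {p q : ℕ} (hp : 0 < p) (hpq : p < q)
    (hq : q < m) (hxp : G.Adj (x (m - 1)) (x p)) (hxq : G.Adj (x q) (x 0)) :
    HasCycle G (p + 1 + (m - q)) := by
  refine ⟨catSeq x (p + 1) fun i => x (m - 1 - i),
    (hx.take (by omega)).cat (hx.backwards (m - 1) (by omega) (by omega)) (fun _ _ => hxp.symm)
      fun i hi j hj => hx.ne (by omega) (by omega) (by omega), by omega, ?_⟩
  rw [catSeq_last (by omega), catSeq_of_lt (by omega), show m - 1 - (m - q - 1) = q by omega]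
  exact hxq

theorem hasCycle_of_three_chords (hx : IsPathSeq G x m) (hm : 3 ≤ m) {s t : ℕ} (hs : 0 < s)
    (hst : s ≤ t) (ht : t + 1 < m) (hlast : G.Adj (x (m - 1)) (x s)) (hzero : G.Adj (x t) (x 0))
    (hsucc : G.Adj (x (s - 1)) (x (t + 1))) : HasCycle G m := by
  let f i := if i + s ≤ t then i + s else if i ≤ t then i + s - (t + 1) else i
  have hf_of_le : ∀ i, i + s ≤ t → f i = i + s := fun i hi => if_pos hi
  have hf_of_lt_of_le : ∀ i, t < i + s → i ≤ t → f i = i + s - (t + 1) := fun i hi hi' => by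
    simp only [f, if_neg hi.not_ge, if_pos hi']
  have hf_of_lt : ∀ i, t < i → f i = i := fun i hi => by
    simp only [f, if_neg (show ¬ i + s ≤ t by omega), if_neg hi.not_ge]
  refine ⟨_, hx.comp f (fun i _ => ?_) (fun i _ j _ h => ?_) (fun i hi => ?_), hm, ?_⟩
  · simp only [f]
    split_ifs <;> omega
  · simp only [f] at h
    split_ifs at h <;> omega
  · rcases lt_trichotomy (i + s) t with his | his | his
    · rw [hf_of_le i his.le, hf_of_le (i + 1) (by omega)]
      exact hx.adj_of_succ_eq (by omega) (by omega)
    · rw [hf_of_le i his.le, hf_of_lt_of_le (i + 1) (by omega) (by omega), his,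
        show i + 1 + s - (t + 1) = 0 by omega]
      exact hzero
    · rcases lt_trichotomy i t with hit | rfl | hit
      · rw [hf_of_lt_of_le i his hit.le, hf_of_lt_of_le (i + 1) (by omega) hit]
        exact hx.adj_of_succ_eq (by omega) (by omega)
      · rw [hf_of_lt_of_le i his le_rfl, hf_of_lt (i + 1) (by omega),
          show i + s - (i + 1) = s - 1 by omega]
        exact hsucc
      · rw [hf_of_lt i hit, hf_of_lt (i + 1) (by omega)]
        exact hx.adj hi
  · simpa only [hf_of_lt (m - 1) (by omega), hf_of_le 0 (by omega), Nat.zero_add] using hlast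

theorem permute (hx : IsPathSeq G x m) {K : Set V} (hK : G.IsClique K) {e f : ℕ} (hf : f ≤ m)
    (hmem : ∀ i, e ≤ i → i < f → x i ∈ K) (σ : Equiv.Perm ℕ)
    (hσ : ∀ i, i < e ∨ f ≤ i → σ i = i) (hσe : 0 < e → σ e = e)
    (hσf : f < m → σ (f - 1) = f - 1) : IsPathSeq G (fun i => x (σ i)) m := by
  have hmaps : ∀ i, e ≤ i → i < f → e ≤ σ i ∧ σ i < f := by
    intro i hei hif
    by_contra hc
    have := σ.injective (hσ (σ i) (by omega))
    omega
  have hlt : ∀ i < m, σ i < m := by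
    intro i hi
    by_cases hc : e ≤ i ∧ i < f
    · exact (hmaps i hc.1 hc.2).2.trans_le hf
    · rwa [hσ i (by omega)]
  refine hx.comp σ hlt (fun i _ j _ h => σ.injective h) fun i hi => ?_
  by_cases hc : e ≤ i ∧ i + 1 < f
  · have hi₁ := hmaps i hc.1 (by omega)
    have hi₂ := hmaps (i + 1) (by omega) hc.2
    exact hK (hmem _ hi₁.1 hi₁.2) (hmem _ hi₂.1 hi₂.2)
      (hx.ne (hlt i (by omega)) (hlt _ hi) (σ.injective.ne (by omega)))
  · have hi₁ : σ i = i := by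
      rcases eq_or_ne i (f - 1) with rfl | hne
      · by_cases hfm : f < m
        · exact hσf hfm
        · exact hσ _ (by omega)
      · exact hσ _ (by omega)
    have hi₂ : σ (i + 1) = i + 1 := by
      rcases eq_or_ne (i + 1) e with rfl | hne
      · exact hσe (by omega)
      · exact hσ _ (by omega)
    rw [hi₁, hi₂]
    exact hx.adj hi

theorem swap [DecidableEq V] (hx : IsPathSeq G x m) {K : Set V} (hK : G.IsClique K) {u v : V}
    (hu : u ∈ K) (hv : v ∈ K) (huv : ∀ i < m, x i ∉ K → (G.Adj (x i) u ↔ G.Adj (x i) v)) :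
    IsPathSeq G (fun i => Equiv.swap u v (x i)) m := by
  have hmem : ∀ {w}, w ∈ K → Equiv.swap u v w ∈ K := by
    intro w hw
    rw [Equiv.swap_apply_def]
    split_ifs <;> assumption
  have hfix : ∀ {w}, w ∉ K → Equiv.swap u v w = w := fun hw =>
    Equiv.swap_apply_of_ne_of_ne (fun h => hw (h ▸ hu)) fun h => hw (h ▸ hv)
  have hout : ∀ i < m, x i ∉ K → ∀ w, G.Adj (x i) w → G.Adj (x i) (Equiv.swap u v w) := by
    intro i hi hiK w hw
    rw [Equiv.swap_apply_def]
    split_ifs with hwu hwv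
    · exact (huv i hi hiK).1 (hwu ▸ hw)
    · exact (huv i hi hiK).2 (hwv ▸ hw)
    · exact hw
  refine ⟨fun i j hi hj h => hx.inj hi hj ((Equiv.swap u v).injective h), fun i hi => ?_⟩
  by_cases hiK : x i ∈ K
  · by_cases hiK' : x (i + 1) ∈ K
    · exact hK (hmem hiK) (hmem hiK') ((Equiv.swap u v).injective.ne (hx.adj hi).ne)
    · rw [hfix hiK']
      exact (hout _ hi hiK' _ (hx.adj hi).symm).symm
  · rw [hfix hiK]
    exact hout i (by omega) hiK _ (hx.adj hi)

/-- The path obtained by turning around the final segment after the vertex of index `p`. -/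
def posaRotate (x : ℕ → V) (m p : ℕ) : ℕ → V :=
  fun i => x (if i ≤ p then i else m + p - i)

theorem posaRotate_of_le {p i : ℕ} (hi : i ≤ p) : posaRotate x m p i = x i :=
  congrArg x (if_pos hi)

theorem posaRotate_of_lt {p i : ℕ} (hi : p < i) : posaRotate x m p i = x (m + p - i) :=
  congrArg x (if_neg hi.not_ge)

theorem posaRotate_last {p : ℕ} (hp : p + 1 < m) : posaRotate x m p (m - 1) = x (p + 1) := by
  rw [posaRotate_of_lt (by omega), show m + p - (m - 1) = p + 1 by omega]

theorem posaRotate_isPathSeq (hx : IsPathSeq G x m) {p : ℕ} (hp : p + 1 < m)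
    (hadj : G.Adj (x (m - 1)) (x p)) : IsPathSeq G (posaRotate x m p) m := by
  refine hx.comp _ (fun i hi => ?_) (fun i hi j hj h => ?_) fun i hi => ?_
  · split_ifs <;> omega
  · split_ifs at h <;> omega
  · rcases lt_trichotomy i p with hip | rfl | hip
    · rw [if_pos hip.le, if_pos (show i + 1 ≤ p from hip)]
      exact hx.adj hi
    · rw [if_pos le_rfl, if_neg (by omega), show m + i - (i + 1) = m - 1 by omega]
      exact hadj.symm
    · rw [if_neg (by omega), if_neg (by omega)]
      exact (hx.adj_of_succ_eq (by omega) (by omega)).symm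

end IsPathSeq

theorem exists_isPathSeq_of_isClique {K : Finset V} (hK : G.IsClique K) {u v : V} (hu : u ∈ K)
    (hv : v ∈ K) (huv : u ≠ v) :
    ∃ f : ℕ → V, IsPathSeq G f K.card ∧ (∀ i < K.card, f i ∈ K) ∧ f 0 = u ∧
      f (K.card - 1) = v := by
  have hpos : 0 < K.card := Finset.card_pos.2 ⟨u, hu⟩
  obtain ⟨e, he⟩ : ∃ e : Fin K.card ≃ K, e ⟨0, hpos⟩ = ⟨u, hu⟩ :=
    ⟨(Equiv.swap ⟨0, hpos⟩ (K.equivFin ⟨u, hu⟩)).trans K.equivFin.symm, by simp⟩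
  let last : Fin K.card := ⟨K.card - 1, by omega⟩
  let e' := (Equiv.swap last (e.symm ⟨v, hv⟩)).trans e
  have hlast : e' last = ⟨v, hv⟩ := by simp [e']
  have hfirst : e' ⟨0, hpos⟩ = ⟨u, hu⟩ := by
    have hcard : 1 < K.card := Finset.one_lt_card.2 ⟨u, hu, v, hv, huv⟩
    have hne : ⟨0, hpos⟩ ≠ e.symm ⟨v, hv⟩ := by
      rw [ne_eq, Equiv.eq_symm_apply, he]
      simpa using huv
    have hne' : ⟨0, hpos⟩ ≠ last := Fin.ne_of_val_ne (by simp only [last]; omega)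
    simp [e', Equiv.swap_apply_of_ne_of_ne hne' hne, he]
  refine ⟨fun i => if h : i < K.card then e' ⟨i, h⟩ else u, ⟨fun i j hi hj h => ?_, fun i hi => ?_⟩,
    fun i hi => ?_, ?_, ?_⟩
  · simpa [hi, hj, Subtype.coe_inj] using h
  · simp only [hi, show i < K.card by omega, dif_pos]
    exact hK (e' _).2 (e' _).2 (by simp)
  · simp [hi]
  · simp [hpos, hfirst]
  · simp only [show K.card - 1 < K.card by omega, dif_pos]
    exact congrArg Subtype.val hlast

end PathSeq

namespace TwoConnected

variable {V : Type*} [Fintype V] {G H : SimpleGraph V}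

theorem mono (h : TwoConnected G) (hGH : G ≤ H) : TwoConnected H :=
  ⟨h.1, fun v => (h.2 v).mono fun _ _ hab => hGH hab⟩

theorem exists_isPathSeq (h : TwoConnected G) {v a b : V} (ha : a ≠ v) (hb : b ≠ v) :
    ∃ (z : ℕ → V) (l : ℕ), IsPathSeq G z (l + 1) ∧ z 0 = a ∧ z l = b ∧ ∀ i, z i ≠ v := by
  obtain ⟨p⟩ := (h.2 v).preconnected ⟨a, ha⟩ ⟨b, hb⟩
  classical
  let q := p.toPath
  refine ⟨fun i => (q.1.getVert i).1, q.1.length, ⟨fun i j hi hj e => ?_, fun i hi => ?_⟩,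
    by simp, by simp, fun i => (q.1.getVert i).2⟩
  · exact q.2.getVert_injOn (Nat.lt_succ_iff.1 hi) (Nat.lt_succ_iff.1 hj) (Subtype.ext e)
  · exact q.1.adj_getVert_succ (Nat.succ_lt_succ_iff.1 hi)

theorem exists_isPathSeq_between (h : TwoConnected G) (v : V) {A B : Set V}
    (hA : ∃ a ∈ A, a ≠ v) (hB : ∃ b ∈ B, b ≠ v) :
    ∃ (z : ℕ → V) (l : ℕ), IsPathSeq G z (l + 1) ∧ z 0 ∈ A ∧ z l ∈ B ∧ (∀ i, z i ≠ v) ∧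
      (∀ i, 0 < i → i ≤ l → z i ∉ A) ∧ ∀ i < l, z i ∉ B := by
  classical
  obtain ⟨a, ha, hav⟩ := hA
  obtain ⟨b, hb, hbv⟩ := hB
  obtain ⟨z, l, hz, rfl, rfl, hzv⟩ := h.exists_isPathSeq hav hbv
  have hex : ∃ i, z i ∈ B := ⟨l, hb⟩
  let t := Nat.find hex
  let s := Nat.findGreatest (z · ∈ A) t
  have htl : t ≤ l := Nat.find_le hb
  have hst : s ≤ t := Nat.findGreatest_le t
  refine ⟨fun i => z (s + i), t - s, hz.drop s (by omega), ?_, ?_, fun i => hzv _, ?_, ?_⟩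
  · exact Nat.findGreatest_spec (P := (z · ∈ A)) (Nat.zero_le t) ha
  · simpa only [Nat.add_sub_cancel' hst] using Nat.find_spec hex
  · intro i hi hit
    exact Nat.findGreatest_is_greatest (P := (z · ∈ A)) (show s < s + i by omega) (by omega)
  · intro i hi
    exact Nat.find_min hex (show s + i < t by omega)

end TwoConnected

/-- The first `m` terms of `x` are the consecutive vertices of a path of `G` starting in `K`. -/
structure IsPathFrom {V : Type*} (G : SimpleGraph V) (K : Finset V) (x : ℕ → V) (m : ℕ) : Prop
    extends IsPathSeq G x m where
  zero_mem : x 0 ∈ K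

/-- The terms `z 0, …, z k` are the consecutive vertices of a path of `G`, and those of index
`e, …, e + |K| - 1` lie in `K`. -/
structure IsPathThrough {V : Type*} (G : SimpleGraph V) (K : Finset V) (z : ℕ → V) (k e : ℕ) : Prop
    extends IsPathSeq G z (k + 1) where
  le : e + K.card ≤ k + 1
  mem : ∀ i, e ≤ i → i < e + K.card → z i ∈ K

/-- There is a path through `K` that leaves the final segment `x t, …, x (m - 1)` of the path `x`
at its first vertex, returns to it further on, and avoids it in between. -/
def HasBypass {V : Type*} (G : SimpleGraph V) (K : Finset V) (m : ℕ) (x : ℕ → V) (t : ℕ) : Prop :=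
  ∃ (z : ℕ → V) (k e b : ℕ), IsPathThrough G K z k e ∧ e + K.card ≤ k ∧ t < b ∧ b < m ∧
    z 0 = x t ∧ z k = x b ∧ ∀ i, 0 < i → i < k → ∀ j, t ≤ j → j < m → z i ≠ x j

section Bypass

variable {V : Type*} {G : SimpleGraph V} {K : Finset V} {x z : ℕ → V} {m k e : ℕ}

namespace IsPathThrough

theorem cons (hz : IsPathThrough G K z k e) {v : V} (hv : G.Adj v (z 0))
    (hne : ∀ i ≤ k, v ≠ z i) : IsPathThrough G K (catSeq (fun _ => v) 1 z) (k + 1) (e + 1) := by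
  have hle := hz.le
  refine ⟨?_, by omega, fun i hi hi' => ?_⟩
  · rw [Nat.add_comm]
    exact (IsPathSeq.const v).cat hz.toIsPathSeq (fun _ _ => hv) fun _ _ j hj => hne j (by omega)
  · rw [catSeq_of_le (by omega)]
    exact hz.mem _ (by omega) (by omega)

theorem reverse (hz : IsPathThrough G K z k e) {i : ℕ} (hi : i ≤ e) :
    IsPathThrough G K (fun j => z (k - j)) (k - i) (k + 1 - (e + K.card)) := by
  have hle := hz.le
  exact ⟨hz.backwards k (by omega) (by omega), by omega,
    fun j hj hj' => hz.mem _ (by omega) (by omega)⟩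

theorem exists_ending_at (hz : IsPathThrough G K z k e) (hK : G.IsClique K) (hek : e + K.card ≤ k)
    {i : ℕ} (hei : e < i) (hik : i < k) :
    ∃ z' k', IsPathThrough G K z' k' e ∧ z' 0 = z 0 ∧ z' k' = z i ∧
      ∀ j ≤ k', z' j ∈ z '' Set.Iio k := by
  rcases Nat.lt_or_ge i (e + K.card) with hi | hi
  · set σ := Equiv.swap i (e + K.card - 1) with hσ
    have hfix : ∀ j, j < e ∨ e + K.card ≤ j → σ j = j := fun j hj =>
      Equiv.swap_apply_of_ne_of_ne (by omega) (by omega)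
    have hfix_start : ∀ j ≤ e, σ j = j := fun j hj =>
      Equiv.swap_apply_of_ne_of_ne (by omega) (by omega)
    have hmaps : ∀ j, (e ≤ j → e ≤ σ j) ∧ (j < e + K.card → σ j < e + K.card) := by
      intro j
      rw [hσ, Equiv.swap_apply_def]
      split_ifs <;> omega
    have hpath := (hz.take (a := e + K.card) (by omega)).permute hK le_rfl hz.mem σ hfix
      (fun _ => hfix_start e le_rfl) fun h => absurd h (lt_irrefl _)
    refine ⟨fun j => z (σ j), e + K.card - 1, ⟨?_, by omega, fun j hj hj' => ?_⟩, ?_, ?_,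
      fun j hj => ⟨σ j, ?_, rfl⟩⟩
    · rwa [Nat.sub_add_cancel (by omega)]
    · exact hz.mem _ ((hmaps j).1 hj) ((hmaps j).2 hj')
    · exact congrArg z (hfix_start 0 (Nat.zero_le e))
    · exact congrArg z (Equiv.swap_apply_right _ _)
    · exact ((hmaps j).2 (by omega)).trans_le hek
  · exact ⟨z, i, ⟨hz.take (by omega), by omega, hz.mem⟩, rfl, rfl, fun j hj =>
      ⟨j, show j < k by omega, rfl⟩⟩

end IsPathThrough

theorem TwoConnected.exists_ear [Fintype V] (h2c : TwoConnected G) (hx : IsPathSeq G x m) {s : ℕ}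
    (hs : s + 1 < m) {A : Set V} (hA : ∃ a ∈ A, a ≠ x s)
    (hAx : ∀ a ∈ A, ∀ j, s < j → j < m → a ≠ x j) :
    ∃ (y : ℕ → V) (l b : ℕ), IsPathSeq G y (l + 1) ∧ y 0 ∈ A ∧ (∀ i, y i ≠ x s) ∧
      (∀ i, 0 < i → i ≤ l → y i ∉ A) ∧ 0 < l ∧ s < b ∧ b < m ∧ y l = x b ∧
      ∀ i < l, ∀ j, s < j → j < m → y i ≠ x j := by
  obtain ⟨y, l, hy, hyA, ⟨b, ⟨hsb, hbm⟩, hb⟩, hyv, hyA', hyB⟩ :=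
    h2c.exists_isPathSeq_between (x s) (B := x '' Set.Ioo s m) hA
      ⟨x (s + 1), ⟨s + 1, ⟨by omega, hs⟩, rfl⟩, hx.ne hs (by omega) (by omega)⟩
  refine ⟨y, l, b, hy, hyA, hyv, hyA', ?_, hsb, hbm, hb.symm, fun i hi j hj hjm hc =>
    hyB i hi ⟨j, ⟨hj, hjm⟩, hc.symm⟩⟩
  rw [Nat.pos_iff_ne_zero]
  rintro rfl
  exact hAx _ hyA b hsb hbm hb.symm

theorem hasBypass_of_forall [Fintype V] (h2c : TwoConnected G) (hx : IsPathSeq G x m) {s : ℕ}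
    (hs : s + 1 < m) {A : Set V} (hA : ∃ a ∈ A, a ≠ x s)
    (hAx : ∀ a ∈ A, ∀ j, s < j → j < m → a ≠ x j)
    (hz : ∀ a ∈ A, a ≠ x s → ∃ z k e, IsPathThrough G K z k e ∧ z 0 = x s ∧ z k = a ∧
      ∀ i, 0 < i → i ≤ k → z i ∈ A) : HasBypass G K m x s := by
  obtain ⟨y, l, b, hy, hyA, hyv, hyA', hl, hsb, hbm, hb, hyx⟩ := h2c.exists_ear hx hs hA hAx
  obtain ⟨z, k, e, hz, hz0, hzk, hzA⟩ := hz _ hyA (hyv 0)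
  have hle := hz.le
  have hzy : ∀ i < k + 1, ∀ j < l, z i ≠ y (1 + j) := by
    intro i hi j hj hc
    rcases Nat.eq_zero_or_pos i with rfl | hi0
    · exact hyv _ (hc.symm.trans hz0)
    · exact hyA' (1 + j) (by omega) (by omega) (hc ▸ hzA i hi0 (by omega))
  have hcat := hz.cat (hy.drop 1 (a := l) (by omega))
    (fun _ _ => by rw [Nat.add_sub_cancel, hzk]; exact hy.adj (by omega)) hzy
  rw [Nat.add_right_comm] at hcat
  refine ⟨_, k + l, e, b, ⟨hcat, by omega, fun i hi hi' => ?_⟩, by omega, hsb, hbm, ?_, ?_, ?_⟩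
  · rw [catSeq_of_lt (by omega)]
    exact hz.mem i hi hi'
  · rw [catSeq_of_lt (by omega), hz0]
  · rw [catSeq_of_le (by omega), ← hb]
    exact congrArg y (by omega)
  · intro i hi hil j hj hjm
    rcases Nat.lt_or_ge i (k + 1) with hik | hik
    · rw [catSeq_of_lt hik]
      rcases hj.eq_or_lt with rfl | hsj
      · exact hz0 ▸ hz.ne hik (by omega) (by omega)
      · exact hAx _ (hzA i hi (by omega)) j hsj hjm
    · rw [catSeq_of_le hik]
      rcases hj.eq_or_lt with rfl | hsj
      · exact hyv _
      · exact hyx _ (by omega) j hsj hjm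

theorem hasBypass_of_last_mem [Fintype V] (h2c : TwoConnected G) (hK : G.IsClique K)
    (hcard : 1 < K.card) (hx : IsPathSeq G x m) {s : ℕ} (hs : x s ∈ K) (hsm : s + 1 < m)
    (hlast : ∀ i, s < i → i < m → x i ∉ K) : HasBypass G K m x s := by
  refine hasBypass_of_forall h2c hx hsm (A := K) (Finset.exists_mem_ne hcard (x s))
    (fun a ha j hj hjm hc => hlast j hj hjm (hc ▸ ha)) fun a ha hne => ?_
  obtain ⟨f, hf, hfK, hf0, hfl⟩ := exists_isPathSeq_of_isClique hK hs ha hne.symm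
  refine ⟨f, K.card - 1, 0, ⟨?_, by omega, fun i _ hi => hfK i (by omega)⟩, hf0, hfl,
    fun i _ hi => hfK i (by omega)⟩
  rwa [Nat.sub_add_cancel (by omega)]

/-- A bypass that returns at `x (t + 1)` is extended by an ear from its other vertices to a later
vertex of `x`; the new bypass runs along the old one towards the ear in whichever direction
passes through `K`. -/
theorem HasBypass.succ [Fintype V] {t : ℕ} (ht : HasBypass G K m x t) (h2c : TwoConnected G)
    (hK : G.IsClique K) (hx : IsPathSeq G x m) (htm : t + 2 < m) : HasBypass G K m x (t + 1) := by
  obtain ⟨z, k, e, b, hz, hek, htb, hbm, hz0, hzk, hzx'⟩ := ht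
  have hk : 0 < k := by
    rw [Nat.pos_iff_ne_zero]
    rintro rfl
    exact hx.ne (by omega) hbm htb.ne (hz0.symm.trans hzk)
  have hzx : ∀ i < k, ∀ j, t < j → j < m → z i ≠ x j := by
    intro i hi j hj hjm
    rcases Nat.eq_zero_or_pos i with rfl | hi0
    · exact hz0 ▸ hx.ne (by omega) hjm (by omega)
    · exact hzx' i hi0 hi j hj.le hjm
  have hadj : G.Adj (x (t + 1)) (z 0) := hz0 ▸ (hx.adj (by omega)).symm
  rcases (Nat.succ_le_of_lt htb).lt_or_eq with hb | rfl
  · have hne : ∀ i ≤ k, x (t + 1) ≠ z i := by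
      intro i hi
      rcases hi.lt_or_eq with hi | rfl
      · exact (hzx i hi _ (by omega) (by omega)).symm
      · exact hzk ▸ hx.ne (by omega) hbm hb.ne
    refine ⟨_, k + 1, e + 1, b, hz.cons hadj hne, by omega, hb, hbm, catSeq_of_lt one_pos, ?_, ?_⟩
    · rw [catSeq_of_le (by omega), Nat.add_sub_cancel, hzk]
    · intro i hi hik j hj hjm
      rw [catSeq_of_le (by omega)]
      exact hzx _ (by omega) j hj hjm
  · refine hasBypass_of_forall h2c hx htm (A := z '' Set.Iio k)
      ⟨z 0, ⟨0, hk, rfl⟩, hadj.ne'⟩ ?_ ?_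
    · rintro _ ⟨i, hi, rfl⟩ j hj hjm
      exact hzx i hi j (by omega) hjm
    · rintro _ ⟨i, hi : i < k, rfl⟩ -
      rcases Nat.lt_or_ge e i with hei | hei
      · obtain ⟨z', k', hz', hz'0, hz'k, hz'A⟩ := hz.exists_ending_at hK hek hei hi
        have hne : ∀ j ≤ k', x (t + 1) ≠ z' j := by
          intro j hj hc
          obtain ⟨j', hj', hj''⟩ := hz'A j hj
          exact hzx j' hj' (t + 1) (by omega) hbm (hj''.trans hc.symm)
        refine ⟨_, _, _, hz'.cons (hz'0 ▸ hadj) hne, catSeq_of_lt one_pos, ?_, fun j hj _ => ?_⟩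
        · rwa [catSeq_of_le (by omega)]
        · rw [catSeq_of_le (by omega)]
          exact hz'A _ (by omega)
      · refine ⟨_, _, _, hz.reverse hei, hzk, congrArg z (by omega), fun j hj _ => ?_⟩
        exact ⟨k - j, show k - j < k by omega, rfl⟩

end Bypass

/-- The situation of the proof: `G` is 2-connected, `K` is a clique with at least `w` vertices, all
degrees are at least `d`, all cycles have fewer than `w + d` and fewer than `m` vertices, and no
path starting in `K` has more than `m` vertices. -/
structure ShortCycles {V : Type*} [Fintype V] (G : SimpleGraph V) (K : Finset V) (w d m : ℕ) :
    Prop where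
  clique : G.IsClique K
  card_le : w ≤ K.card
  two_le : 2 ≤ w
  degree_le : ∀ v, d ≤ (G.neighborSet v).ncard
  three_le : 3 ≤ m
  cycle_lt : ∀ l, HasCycle G l → l < m
  cycle_lt_add : ∀ l, HasCycle G l → l < w + d
  longest : ∀ x l, IsPathFrom G K x l → l ≤ m
  twoConnected : TwoConnected G

/-- `x p` is a neighbour of the last vertex of the path, `x q` lies in `K`, and no such vertices
lie between them. -/
structure Crossing {V : Type*} (G : SimpleGraph V) (K : Finset V) (m : ℕ) (x : ℕ → V)
    (p q : ℕ) : Prop where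
  lt : p < q
  lt_length : q < m
  adj : G.Adj (x (m - 1)) (x p)
  mem : x q ∈ K
  not_mem : ∀ i, p < i → i < q → x i ∉ K
  not_adj : ∀ i, p < i → i < q → ¬ G.Adj (x (m - 1)) (x i)

open scoped Classical in
/-- The positive indices of vertices of `K` and of successors of neighbours of the last vertex
on the path. -/
noncomputable def markedIndices {V : Type*} (G : SimpleGraph V) (K : Finset V) (m : ℕ)
    (x : ℕ → V) : Finset ℕ :=
  {j ∈ Finset.Ico 1 m | x j ∈ K ∨ G.Adj (x (m - 1)) (x (j - 1))}

/-- `x s` is the first neighbour of the last vertex on the path, the path runs inside `K` up to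
there, and afterwards it has no two consecutive vertices in `K`. -/
structure CliqueSegment {V : Type*} (G : SimpleGraph V) (K : Finset V) (m : ℕ) (x : ℕ → V)
    (s : ℕ) : Prop where
  pos : 0 < s
  lt_length : s + 2 < m
  adj : G.Adj (x (m - 1)) (x s)
  not_adj : ∀ i < s, ¬ G.Adj (x (m - 1)) (x i)
  mem : ∀ i ≤ s, x i ∈ K
  not_mem_succ : ∀ i, s ≤ i → i + 1 < m → x i ∈ K → x (i + 1) ∉ K

theorem exists_greatest_lt {P : ℕ → Prop} {a b : ℕ} (hab : a < b) (ha : P a) :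
    ∃ g, a ≤ g ∧ g < b ∧ P g ∧ ∀ i, g < i → i < b → ¬ P i := by
  classical
  have hle : a ≤ b - 1 := by omega
  have := Nat.findGreatest_le (P := P) (b - 1)
  exact ⟨Nat.findGreatest P (b - 1), Nat.le_findGreatest hle ha, by omega,
    Nat.findGreatest_spec hle ha, fun i h h' => Nat.findGreatest_is_greatest h (by omega)⟩

theorem exists_least_le {P : ℕ → Prop} {a : ℕ} (ha : P a) :
    ∃ g, g ≤ a ∧ P g ∧ ∀ i < g, ¬ P i := by
  classical
  exact ⟨Nat.find ⟨a, ha⟩, Nat.find_min' _ ha, Nat.find_spec ⟨a, ha⟩, fun i hi => Nat.find_min _ hi⟩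

theorem ncard_le_card_of_forall_exists {V : Type*} {x : ℕ → V} {S : Set V} {T : Finset ℕ}
    (h : ∀ a ∈ S, ∃ i ∈ T, x i = a) : S.ncard ≤ T.card := by
  have hsub : S ⊆ x '' T := fun a ha => h a ha
  calc S.ncard ≤ (x '' T).ncard := Set.ncard_le_ncard hsub (T.finite_toSet.image x)
    _ ≤ (T : Set ℕ).ncard := Set.ncard_image_le T.finite_toSet
    _ = T.card := Set.ncard_coe_finset T

section PathFrom

variable {V : Type*} {G : SimpleGraph V} {K : Finset V} {x : ℕ → V} {m p q : ℕ}

theorem IsPathFrom.posaRotate (hx : IsPathFrom G K x m) (hp : p + 1 < m)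
    (hadj : G.Adj (x (m - 1)) (x p)) : IsPathFrom G K (IsPathSeq.posaRotate x m p) m :=
  ⟨hx.posaRotate_isPathSeq hp hadj, by
    rw [IsPathSeq.posaRotate_of_le (Nat.zero_le p)]
    exact hx.zero_mem⟩

theorem succ_lt_of_adj_last {i : ℕ} (hi : i < m) (hadj : G.Adj (x (m - 1)) (x i)) :
    i + 1 < m := by
  by_contra hc
  obtain rfl : i = m - 1 := by omega
  exact hadj.ne rfl

/-- The cycle runs through `z`, along `x (b + 1), …, x (m - 1)` and back along
`x g, …, x (t + 1)`. -/
theorem IsPathSeq.hasCycle_of_bypass {z : ℕ → V} {k t g b : ℕ} (hx : IsPathSeq G x m)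
    (hz : IsPathSeq G z (k + 1)) (hk : 2 ≤ k) (hz0 : z 0 = x t) (hzk : z k = x b)
    (hzx : ∀ i, 0 < i → i < k → ∀ j, t ≤ j → j < m → z i ≠ x j) (htg : t ≤ g) (hgb : g < b)
    (hbm : b < m) (ht : G.Adj (x (m - 1)) (x t)) (hg : G.Adj (x (m - 1)) (x g)) :
    HasCycle G (k + 1 + (m - 1 - b) + (g - t)) := by
  have hdisj : ∀ i < k + 1, ∀ j, t < j → j < m → j ≠ b → z i ≠ x j := by
    intro i hi j hj hjm hjb
    rcases Nat.eq_zero_or_pos i with rfl | hi0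
    · exact hz0 ▸ hx.ne (by omega) hjm hj.ne
    · rcases (Nat.lt_succ_iff.1 hi).lt_or_eq with hik | rfl
      · exact hzx i hi0 hik j hj.le hjm
      · exact hzk ▸ hx.ne hbm hjm hjb.symm
  have hzx' := hz.cat (hx.drop (a := m - 1 - b) (b + 1) (by omega))
    (fun _ _ => by rw [Nat.add_sub_cancel, hzk]; exact hx.adj (by omega))
    (fun i hi j hj => hdisj i hi _ (by omega) (by omega) (by omega))
  set y := catSeq z (k + 1) fun i => x (b + 1 + i) with hy
  have hend : y (k + 1 + (m - 1 - b) - 1) = x (m - 1) := by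
    rcases Nat.lt_or_ge b (m - 1) with hb | hb
    · rw [hy, catSeq_last (by omega)]
      exact congrArg x (by omega)
    · obtain rfl : b = m - 1 := by omega
      rw [hy, Nat.sub_self, catSeq_of_lt (by omega)]
      exact hzk
  have hcat := hzx'.cat (hx.backwards (a := g - t) g (by omega) (by omega))
    (fun _ _ => by rwa [hend]) fun i hi j hj => by
      rcases Nat.lt_or_ge i (k + 1) with hik | hik
      · rw [hy, catSeq_of_lt hik]
        exact hdisj i hik _ (by omega) (by omega) (by omega)
      · rw [hy, catSeq_of_le hik]
        exact hx.ne (by omega) (by omega) (by omega)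
  have hzero : catSeq y (k + 1 + (m - 1 - b)) (fun i => x (g - i)) 0 = x t := by
    rw [catSeq_of_lt (by omega), hy, catSeq_of_lt (by omega), hz0]
  refine ⟨_, hcat, by omega, ?_⟩
  rw [hzero]
  rcases htg.eq_or_lt with rfl | htg
  · rw [Nat.sub_self, catSeq_of_lt (by omega)]
    exact hend ▸ ht
  · rw [catSeq_last (by omega), show g - (g - t - 1) = t + 1 by omega]
    exact (hx.adj (by omega)).symm

theorem exists_crossing_of_lt (hpq : p < q) (hq : q < m) (hp : G.Adj (x (m - 1)) (x p))
    (hqK : x q ∈ K) : ∃ p' q', p ≤ p' ∧ q' ≤ q ∧ Crossing G K m x p' q' := by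
  obtain ⟨p', hpp', hp'q, hp', hmax⟩ := exists_greatest_lt
    (P := fun i => G.Adj (x (m - 1)) (x i)) hpq hp
  obtain ⟨q', hq'q, ⟨hpq', hq'⟩, hmin⟩ := exists_least_le (P := fun i => p' < i ∧ x i ∈ K)
    ⟨hp'q, hqK⟩
  exact ⟨p', q', hpp', hq'q, hpq', by omega, hp', hq', fun i hi hi' hiK => hmin i hi' ⟨hi, hiK⟩,
    fun i hi hi' => hmax i hi (by omega)⟩

theorem Crossing.markedIndices_subset (hpq : Crossing G K m x p q) :
    markedIndices G K m x ⊆ Finset.Ico 1 (p + 2) ∪ Finset.Ico q m := by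
  classical
  intro j hj
  rw [markedIndices, Finset.mem_filter, Finset.mem_Ico] at hj
  obtain ⟨⟨hj0, hjm⟩, hj⟩ := hj
  rw [Finset.mem_union, Finset.mem_Ico, Finset.mem_Ico]
  rcases hj with hjK | hadj
  · have : ¬ (p < j ∧ j < q) := fun hc => hpq.not_mem j hc.1 hc.2 hjK
    omega
  · have : ¬ (p < j - 1 ∧ j - 1 < q) := fun hc => hpq.not_adj _ hc.1 hc.2 hadj
    omega

end PathFrom

namespace ShortCycles

variable {V : Type*} [Fintype V] {G : SimpleGraph V} {K : Finset V} {w d m : ℕ} {x : ℕ → V}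

theorem exists_index_of_mem (h : ShortCycles G K w d m) (hx : IsPathFrom G K x m) {a : V}
    (ha : a ∈ K) : ∃ i < m, x i = a := by
  by_contra! hc
  have := h.three_le
  have := h.longest _ _ ⟨(IsPathSeq.const a).cat hx.toIsPathSeq
    (fun _ _ => h.clique ha hx.zero_mem (hc 0 (by omega)).symm) fun _ _ j hj => (hc j hj).symm, ha⟩
  omega

theorem exists_index_of_adj (h : ShortCycles G K w d m) (hx : IsPathFrom G K x m) {a : V}
    (ha : G.Adj (x (m - 1)) a) : ∃ i < m, x i = a := by
  by_contra! hc
  have hm := h.three_le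
  have := h.longest _ _ ⟨hx.cat (IsPathSeq.const a) (fun _ _ => ha) fun i hi _ _ => hc i hi, by
    rw [catSeq_of_lt (by omega)]
    exact hx.zero_mem⟩
  omega

theorem not_adj_zero (h : ShortCycles G K w d m) (hx : IsPathSeq G x m) :
    ¬ G.Adj (x (m - 1)) (x 0) := fun hc =>
  lt_irrefl _ (h.cycle_lt m ⟨x, hx, h.three_le, hc⟩)

theorem adj_penultimate (h : ShortCycles G K w d m) (hx : IsPathSeq G x m) :
    G.Adj (x (m - 1)) (x (m - 2)) := by
  have hm := h.three_le
  exact (hx.adj_of_succ_eq (by omega) (by omega)).symm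

theorem last_notMem (h : ShortCycles G K w d m) (hx : IsPathFrom G K x m) : x (m - 1) ∉ K := by
  intro hK
  have hm := h.three_le
  exact h.not_adj_zero hx.toIsPathSeq
    (h.clique hK hx.zero_mem (hx.ne (by omega) (by omega) (by omega)))

theorem pos_of_adj_last (h : ShortCycles G K w d m) (hx : IsPathSeq G x m) {i : ℕ}
    (hadj : G.Adj (x (m - 1)) (x i)) : 0 < i := by
  rw [Nat.pos_iff_ne_zero]
  rintro rfl
  exact h.not_adj_zero hx hadj

theorem hasCycle_of_mem_of_adj (h : ShortCycles G K w d m) (hx : IsPathFrom G K x m) {p q : ℕ}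
    (hpq : p < q) (hq : q < m) (hadj : G.Adj (x (m - 1)) (x p)) (hK : x q ∈ K) :
    HasCycle G (p + 1 + (m - q)) := by
  have hp := h.pos_of_adj_last hx.toIsPathSeq hadj
  exact hx.hasCycle_of_chords hp hpq hq hadj
    (h.clique hK hx.zero_mem (hx.ne hq (by omega) (by omega)))

theorem succ_notMem_of_adj_last (h : ShortCycles G K w d m) (hx : IsPathFrom G K x m) {p : ℕ}
    (hp : p + 1 < m) (hadj : G.Adj (x (m - 1)) (x p)) : x (p + 1) ∉ K := fun hK => by
  have := h.cycle_lt _ (h.hasCycle_of_mem_of_adj hx p.lt_succ_self hp hadj hK)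
  omega

theorem hasBypass (h : ShortCycles G K w d m) (hx : IsPathSeq G x m) {s : ℕ} (hs : x s ∈ K)
    (hlast : ∀ i, s < i → i < m → x i ∉ K) {t : ℕ} (hst : s ≤ t) (htm : t + 1 < m) :
    HasBypass G K m x t := by
  induction t, hst using Nat.le_induction with
  | base =>
    exact hasBypass_of_last_mem h.twoConnected h.clique (h.two_le.trans h.card_le) hx hs htm hlast
  | succ t _ ih => exact (ih (by omega)).succ h.twoConnected h.clique hx htm

/-- Otherwise a bypass starting at the first neighbour of the last vertex would close up a cycle
through `K` and nearly all neighbours of the last vertex. -/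
theorem exists_adj_last_lt_mem (h : ShortCycles G K w d m) (hx : IsPathFrom G K x m) :
    ∃ p q, p < q ∧ q < m ∧ G.Adj (x (m - 1)) (x p) ∧ x q ∈ K := by
  by_contra! hnc
  have hm := h.three_le
  have hw := h.two_le
  have hKw := h.card_le
  obtain ⟨s, -, hsm, hs, hsmax⟩ := exists_greatest_lt (P := (x · ∈ K)) (b := m)
    (by omega) hx.zero_mem
  obtain ⟨t, htm, ht, htmin⟩ := exists_least_le (P := fun i => G.Adj (x (m - 1)) (x i))
    (h.adj_penultimate hx.toIsPathSeq)
  have hst : s ≤ t := by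
    by_contra hts
    exact hnc t s (by omega) hsm ht hs
  obtain ⟨z, k, e, b, hz, hek, htb, hbm, hz0, hzk, hzx⟩ :=
    h.hasBypass hx.toIsPathSeq hs hsmax hst (by omega)
  obtain ⟨g, htg, hgb, hg, hgmax⟩ := exists_greatest_lt
    (P := fun i => G.Adj (x (m - 1)) (x i)) htb ht
  have hcycle := h.cycle_lt_add _ (hx.hasCycle_of_bypass hz.toIsPathSeq (by omega) hz0 hzk hzx htg
    hgb hbm ht hg)
  have hdeg : (G.neighborSet (x (m - 1))).ncard ≤
      (Finset.Icc t g ∪ Finset.Ico b (m - 1)).card := by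
    refine ncard_le_card_of_forall_exists (x := x) fun a (ha : G.Adj _ a) => ?_
    obtain ⟨i, hi, rfl⟩ := h.exists_index_of_adj hx ha
    refine ⟨i, ?_, rfl⟩
    have hi' := succ_lt_of_adj_last hi ha
    have hti : ¬ i < t := fun hit => htmin i hit ha
    have hgi : ¬ (g < i ∧ i < b) := fun hgi => hgmax i hgi.1 hgi.2 ha
    rw [Finset.mem_union, Finset.mem_Icc, Finset.mem_Ico]
    omega
  have hunion := Finset.card_union_le (Finset.Icc t g) (Finset.Ico b (m - 1))
  rw [Nat.card_Icc, Nat.card_Ico] at hunion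
  have := h.degree_le (x (m - 1))
  omega

theorem exists_crossing (h : ShortCycles G K w d m) (hx : IsPathFrom G K x m) :
    ∃ p q, Crossing G K m x p q := by
  obtain ⟨p, q, hpq, hq, hp, hqK⟩ := h.exists_adj_last_lt_mem hx
  obtain ⟨p', q', -, -, hcross⟩ := exists_crossing_of_lt hpq hq hp hqK
  exact ⟨p', q', hcross⟩

theorem card_add_ncard_le (h : ShortCycles G K w d m) (hx : IsPathFrom G K x m) :
    K.card + (G.neighborSet (x (m - 1))).ncard ≤ (markedIndices G K m x).card + 1 := by
  classical
  set A := {j ∈ Finset.Ico 1 m | x j ∈ K}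
  set B := {j ∈ Finset.Ico 1 m | G.Adj (x (m - 1)) (x (j - 1))}
  have hA : K.card ≤ A.card + 1 := by
    rw [← Set.ncard_coe_finset]
    refine (ncard_le_card_of_forall_exists (x := x) fun a ha => ?_).trans
      (Finset.card_insert_le 0 A)
    obtain ⟨i, hi, rfl⟩ := h.exists_index_of_mem hx ha
    refine ⟨i, ?_, rfl⟩
    rw [Finset.mem_insert, Finset.mem_filter, Finset.mem_Ico]
    exact (Nat.eq_zero_or_pos i).imp_right fun hi0 => ⟨⟨hi0, hi⟩, ha⟩
  have hB : (G.neighborSet (x (m - 1))).ncard ≤ B.card := by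
    refine ncard_le_card_of_forall_exists (x := fun j => x (j - 1)) fun a ha => ?_
    obtain ⟨i, hi, rfl⟩ := h.exists_index_of_adj hx ha
    have := succ_lt_of_adj_last hi ha
    exact ⟨i + 1, Finset.mem_filter.2 ⟨Finset.mem_Ico.2 ⟨by omega, this⟩, ha⟩, rfl⟩
  have hdisj : Disjoint A B := by
    refine Finset.disjoint_filter.2 fun j hj hjK hadj => ?_
    rw [Finset.mem_Ico] at hj
    refine h.succ_notMem_of_adj_last hx (by omega) hadj ?_
    rwa [Nat.sub_add_cancel hj.1]
  rw [markedIndices, Finset.filter_or, Finset.card_union_of_disjoint hdisj]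
  omega

end ShortCycles

namespace Crossing

variable {V : Type*} [Fintype V] {G : SimpleGraph V} {K : Finset V} {w d m p q : ℕ} {x : ℕ → V}

theorem add_two_le (hpq : Crossing G K m x p q) (h : ShortCycles G K w d m)
    (hx : IsPathFrom G K x m) : p + 2 ≤ q := by
  have hlt := hpq.lt
  have hqm := hpq.lt_length
  by_contra hc
  obtain rfl : q = p + 1 := by omega
  exact h.succ_notMem_of_adj_last hx hqm hpq.adj hpq.mem

/-- The cycle through both end segments has `p + 1 + (m - q) < w + d` vertices; as the marked
indices have to fit into these segments, all inequalities are equalities. -/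
theorem tight (hpq : Crossing G K m x p q) (h : ShortCycles G K w d m)
    (hx : IsPathFrom G K x m) : p + 2 + (m - q) = w + d ∧ K.card = w ∧
      (G.neighborSet (x (m - 1))).ncard = d ∧
      markedIndices G K m x = Finset.Ico 1 (p + 2) ∪ Finset.Ico q m := by
  have hle := hpq.add_two_le h hx
  have hcycle := h.cycle_lt_add _
    (h.hasCycle_of_mem_of_adj hx hpq.lt hpq.lt_length hpq.adj hpq.mem)
  have hsub := hpq.markedIndices_subset
  have hmarked := h.card_add_ncard_le hx
  have hcard : (Finset.Ico 1 (p + 2) ∪ Finset.Ico q m).card = p + 1 + (m - q) := by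
    rw [Finset.card_union_of_disjoint, Nat.card_Ico, Nat.card_Ico]
    · omega
    exact Finset.disjoint_left.2 fun j hj hj' => by
      rw [Finset.mem_Ico] at hj hj'
      omega
  have hsub_card := Finset.card_le_card hsub
  have hw := h.card_le
  have hd := h.degree_le (x (m - 1))
  exact ⟨by omega, by omega, by omega, Finset.eq_of_subset_of_card_le hsub (by omega)⟩

theorem succ_mem_or_adj (hpq : Crossing G K m x p q) (h : ShortCycles G K w d m)
    (hx : IsPathFrom G K x m) {i : ℕ} (hi : i ≤ p ∨ q ≤ i + 1) (him : i + 1 < m) :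
    x (i + 1) ∈ K ∨ G.Adj (x (m - 1)) (x i) := by
  classical
  have := hpq.lt
  have hmem : i + 1 ∈ markedIndices G K m x := by
    rw [(hpq.tight h hx).2.2.2, Finset.mem_union, Finset.mem_Ico, Finset.mem_Ico]
    omega
  rw [markedIndices, Finset.mem_filter] at hmem
  exact hmem.2

end Crossing

namespace ShortCycles

variable {V : Type*} [Fintype V] {G : SimpleGraph V} {K : Finset V} {w d m : ℕ} {x : ℕ → V}

theorem card_eq (h : ShortCycles G K w d m) (hx : IsPathFrom G K x m) : K.card = w := by
  obtain ⟨p, q, hpq⟩ := h.exists_crossing hx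
  exact (hpq.tight h hx).2.1

theorem ncard_neighborSet_last (h : ShortCycles G K w d m) (hx : IsPathFrom G K x m) :
    (G.neighborSet (x (m - 1))).ncard = d := by
  obtain ⟨p, q, hpq⟩ := h.exists_crossing hx
  exact (hpq.tight h hx).2.2.1

theorem exists_cliqueSegment (h : ShortCycles G K w d m) (hx : IsPathFrom G K x m) :
    ∃ s, CliqueSegment G K m x s := by
  obtain ⟨p, q, hpq⟩ := h.exists_crossing hx
  have hle := hpq.add_two_le h hx
  have hqm := hpq.lt_length
  obtain ⟨s, hsp, hs, hmin⟩ := exists_least_le (P := fun i => G.Adj (x (m - 1)) (x i)) hpq.adj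
  have hs0 := h.pos_of_adj_last hx.toIsPathSeq hs
  have : q ≠ m - 1 := by
    rintro rfl
    exact h.last_notMem hx hpq.mem
  have hmem : ∀ i ≤ s, x i ∈ K := by
    rintro (_ | i) hi
    · exact hx.zero_mem
    · exact (hpq.succ_mem_or_adj h hx (by omega) (by omega)).resolve_right (hmin i (by omega))
  refine ⟨s, hs0, by omega, hs, hmin, hmem, fun t hst htm htK htK' => ?_⟩
  exact lt_irrefl m (h.cycle_lt m (hx.hasCycle_of_three_chords h.three_le hs0 hst htm hs
    (h.clique htK hx.zero_mem (hx.ne (by omega) (by omega) (by omega)))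
    (h.clique (hmem _ (by omega)) htK' (hx.ne (by omega) htm (by omega)))))

end ShortCycles

section PathFrom

variable {V : Type*} {G : SimpleGraph V} {K : Finset V} {x : ℕ → V} {m : ℕ}

theorem IsPathFrom.swap [DecidableEq V] (hx : IsPathFrom G K x m) (hK : G.IsClique K) {u v : V}
    (hu : u ∈ K) (hv : v ∈ K) (huv : ∀ i < m, x i ∉ K → (G.Adj (x i) u ↔ G.Adj (x i) v)) :
    IsPathFrom G K (fun i => Equiv.swap u v (x i)) m := by
  refine ⟨hx.toIsPathSeq.swap hK hu hv huv, ?_⟩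
  rw [Equiv.swap_apply_def]
  split_ifs <;> first | assumption | exact hx.zero_mem

end PathFrom

theorem swap_apply_ne_of_notMem {V : Type*} [DecidableEq V] {K : Finset V} {u v a f : V}
    (hu : u ∈ K) (hv : v ∈ K) (hf : f ∉ K) (ha : a ≠ f) : Equiv.swap u v a ≠ f := by
  rw [Equiv.swap_apply_def]
  split_ifs
  exacts [ne_of_mem_of_not_mem hv hf, ne_of_mem_of_not_mem hu hf, ha]

namespace ShortCycles

variable {V : Type*} [Fintype V] {G : SimpleGraph V} {K : Finset V} {w d m s : ℕ} {x : ℕ → V}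

theorem not_adj_succ_of_adj (h : ShortCycles G K w d m) (hx : IsPathFrom G K x m) {f : V}
    (hf : ∀ i < m, x i ≠ f) {i : ℕ} (him : i + 1 < m) (hi : G.Adj f (x i)) :
    ¬ G.Adj f (x (i + 1)) := by
  intro hi'
  have hdrop := (IsPathSeq.const f).cat (hx.drop (a := m - (i + 1)) (i + 1) (by omega))
    (fun _ _ => hi') fun _ _ j hj => (hf _ (by omega)).symm
  have hcat := (hx.take (a := i + 1) (by omega)).cat hdrop (fun _ _ => hi.symm) fun j hj l hl => by
    rcases Nat.eq_zero_or_pos l with rfl | hl0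
    · exact hf _ (by omega)
    · rw [catSeq_of_le (by omega)]
      exact hx.ne (by omega) (by omega) (by omega)
  have := h.longest _ _ ⟨hcat, by
    rw [catSeq_of_lt (by omega)]
    exact hx.zero_mem⟩
  omega

theorem succ_mem_or_adj_last (h : ShortCycles G K w d m) (hm : m = w + d)
    (hx : IsPathFrom G K x m) {i : ℕ} (hi : i + 1 < m) :
    x (i + 1) ∈ K ∨ G.Adj (x (m - 1)) (x i) := by
  obtain ⟨p, q, hpq⟩ := h.exists_crossing hx
  have hqm := hpq.lt_length
  have htight := (hpq.tight h hx).1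
  exact hpq.succ_mem_or_adj h hx (by omega) hi

theorem adj_last_of_notMem (h : ShortCycles G K w d m) (hm : m = w + d)
    (hx : IsPathFrom G K x m) {i : ℕ} (hi : i + 1 < m) (hK : x (i + 1) ∉ K) :
    G.Adj (x (m - 1)) (x i) :=
  (h.succ_mem_or_adj_last hm hx hi).resolve_left hK

/-- Turning around the path behind a crossing `p < q` makes `x (m - 1)` and `x (m - 2)` the
successors of `x p`. -/
theorem penultimate_mem (h : ShortCycles G K w d m) (hm : m = w + d) (hx : IsPathFrom G K x m) :
    x (m - 2) ∈ K := by
  obtain ⟨p, q, hpq⟩ := h.exists_crossing hx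
  have hle := hpq.add_two_le h hx
  have hqm := hpq.lt_length
  have hmem_or_adj := h.succ_mem_or_adj_last hm (hx.posaRotate (by omega) hpq.adj)
    (i := p + 1) (by omega)
  rw [IsPathSeq.posaRotate_last (by omega), IsPathSeq.posaRotate_of_lt (by omega),
    IsPathSeq.posaRotate_of_lt (by omega), show m + p - (p + 1 + 1) = m - 2 by omega,
    show m + p - (p + 1) = m - 1 by omega] at hmem_or_adj
  exact hmem_or_adj.resolve_right fun hc => hpq.not_adj (p + 1) (by omega) (by omega) hc.symm

theorem add_two_mem_of_adj_last (h : ShortCycles G K w d m) (hm : m = w + d)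
    (hx : IsPathFrom G K x m) {p : ℕ} (hp : p + 2 < m) (hadj : G.Adj (x (m - 1)) (x p)) :
    x (p + 2) ∈ K := by
  have hmem := h.penultimate_mem hm (hx.posaRotate (by omega) hadj)
  rwa [IsPathSeq.posaRotate_of_lt (by omega), show m + p - (m - 2) = p + 2 by omega] at hmem

theorem adj_last_iff_mem (h : ShortCycles G K w d m) (hm : m = w + d) (hx : IsPathFrom G K x m)
    (hs : CliqueSegment G K m x s) {i : ℕ} (hsi : s ≤ i) (him : i < m) :
    G.Adj (x (m - 1)) (x i) ↔ x i ∈ K := by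
  refine ⟨fun hadj => ?_, fun hK => ?_⟩
  · by_contra hK
    have hi := succ_lt_of_adj_last him hadj
    have hsi' : i ≠ s := by
      rintro rfl
      exact hK (hs.mem _ le_rfl)
    obtain ⟨i, rfl⟩ : ∃ j, i = j + 1 := ⟨i - 1, by omega⟩
    exact h.succ_notMem_of_adj_last hx hi hadj
      (h.add_two_mem_of_adj_last hm hx hi (h.adj_last_of_notMem hm hx him hK))
  · have hi : i ≠ m - 1 := by
      rintro rfl
      exact h.last_notMem hx hK
    exact h.adj_last_of_notMem hm hx (by omega) (hs.not_mem_succ i hsi (by omega) hK)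

theorem adj_last_iff (h : ShortCycles G K w d m) (hm : m = w + d) (hx : IsPathFrom G K x m)
    (hs : CliqueSegment G K m x s) (z : V) :
    G.Adj (x (m - 1)) z ↔ z ∈ K ∧ ∀ i < s, x i ≠ z := by
  have := hs.lt_length
  refine ⟨fun hadj => ?_, fun ⟨hzK, hz⟩ => ?_⟩
  · obtain ⟨i, hi, rfl⟩ := h.exists_index_of_adj hx hadj
    have hsi : s ≤ i := not_lt.1 fun hc => hs.not_adj i hc hadj
    exact ⟨(h.adj_last_iff_mem hm hx hs hsi hi).1 hadj,
      fun j hj => hx.ne (by omega) hi (by omega)⟩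
  · obtain ⟨i, hi, rfl⟩ := h.exists_index_of_mem hx hzK
    exact (h.adj_last_iff_mem hm hx hs (not_lt.1 fun hc => hz i hc rfl) hi).2 hzK

theorem cliqueSegment_add_eq (h : ShortCycles G K w d m) (hm : m = w + d)
    (hx : IsPathFrom G K x m) (hs : CliqueSegment G K m x s) : s + d = w := by
  have hsm := hs.lt_length
  have hK : (K : Set V) = x '' Set.Iio s ∪ G.neighborSet (x (m - 1)) := by
    ext z
    rw [Set.mem_union, mem_neighborSet, h.adj_last_iff hm hx hs]
    refine ⟨fun hz => ?_, ?_⟩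
    · by_cases hc : ∃ i < s, x i = z
      · exact Or.inl hc
      · exact Or.inr ⟨hz, by push Not at hc; exact hc⟩
    · rintro (⟨i, hi, rfl⟩ | hz)
      · exact hs.mem i (le_of_lt hi)
      · exact hz.1
  have hdisj : Disjoint (x '' Set.Iio s) (G.neighborSet (x (m - 1))) := by
    rw [Set.disjoint_left]
    rintro _ ⟨i, hi, rfl⟩ hadj
    exact hs.not_adj i hi hadj
  have hinj : Set.InjOn x (Set.Iio s) := fun i hi j hj hij =>
    hx.inj (lt_trans hi (by omega)) (lt_trans hj (by omega)) hij
  rw [← h.card_eq hx, ← Set.ncard_coe_finset, hK, Set.ncard_union_eq hdisj,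
    h.ncard_neighborSet_last hx, hinj.ncard_image, ← Finset.coe_Iio, Set.ncard_coe_finset,
    Nat.card_Iio]

theorem two_le_of_cliqueSegment (h : ShortCycles G K w d m) (hm : m = w + d)
    (hx : IsPathFrom G K x m) (hs : CliqueSegment G K m x s) : 2 ≤ d := by
  have := h.cliqueSegment_add_eq hm hx hs
  have := hs.lt_length
  have hne : x s ≠ x (m - 2) := hx.ne (by omega) (by omega) (by omega)
  rw [← h.ncard_neighborSet_last hx, ← Set.ncard_pair hne]
  refine Set.ncard_le_ncard ?_ (Set.toFinite _)
  rintro _ (rfl | rfl)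
  · exact hs.adj
  · exact h.adj_penultimate hx.toIsPathSeq

theorem adj_iff_adj_last (h : ShortCycles G K w d m) (hm : m = w + d) (hx : IsPathFrom G K x m)
    {i : ℕ} (hi : i < m) (hiK : x i ∉ K) (z : V) : G.Adj (x i) z ↔ G.Adj (x (m - 1)) z := by
  obtain ⟨s, hs⟩ := h.exists_cliqueSegment hx
  rcases eq_or_ne i (m - 1) with rfl | hne
  · rfl
  have hsi : s < i := not_le.1 fun hc => hiK (hs.mem i hc)
  obtain ⟨i, rfl⟩ : ∃ j, i = j + 1 := ⟨i - 1, by omega⟩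
  have hr := hx.posaRotate hi (h.adj_last_of_notMem hm hx hi hiK)
  obtain ⟨s', hs'⟩ := h.exists_cliqueSegment hr
  obtain rfl : s' = s := by
    have := h.cliqueSegment_add_eq hm hx hs
    have := h.cliqueSegment_add_eq hm hr hs'
    omega
  have hiff := h.adj_last_iff hm hr hs' z
  rw [IsPathSeq.posaRotate_last hi] at hiff
  rw [hiff, h.adj_last_iff hm hx hs]
  refine and_congr_right fun _ => forall₂_congr fun j hj => ?_
  rw [IsPathSeq.posaRotate_of_le (by omega)]

/-- Exchanging `v` with `x (i + 1)` gives a path into which `f` could be inserted. -/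
theorem false_of_adj_of_adj (h : ShortCycles G K w d m) (hm : m = w + d)
    (hx : IsPathFrom G K x m) {f v : V} (hfK : f ∉ K) (hf : ∀ i < m, x i ≠ f) {i : ℕ}
    (hi : i + 1 < m) (hiK : x (i + 1) ∈ K) (hv : v ∈ K) (hne : v ≠ x i)
    (hiff : G.Adj (x (m - 1)) (x (i + 1)) ↔ G.Adj (x (m - 1)) v) (hfi : G.Adj f (x i))
    (hfv : G.Adj f v) : False := by
  classical
  have hy := hx.swap h.clique hiK hv fun j hj hjK => by
    rw [h.adj_iff_adj_last hm hx hj hjK, h.adj_iff_adj_last hm hx hj hjK, hiff]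
  refine h.not_adj_succ_of_adj hy
    (fun j hj => swap_apply_ne_of_notMem hiK hv hfK (hf j hj)) hi ?_ ?_
  · rwa [Equiv.swap_apply_of_ne_of_ne (hx.adj hi).ne hne.symm]
  · rwa [Equiv.swap_apply_left]

theorem adj_last_of_adj (h : ShortCycles G K w d m) (hm : m = w + d) (hx : IsPathFrom G K x m)
    {f u v : V} (hfK : f ∉ K) (hf : ∀ i < m, x i ≠ f) (hu : u ∈ K) (hv : v ∈ K) (huv : u ≠ v)
    (hfu : G.Adj f u) (hfv : G.Adj f v) : G.Adj (x (m - 1)) u := by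
  classical
  obtain ⟨s, hs⟩ := h.exists_cliqueSegment hx
  have hs0 := hs.pos
  have hsm := hs.lt_length
  have exists_index : ∀ a ∈ K, ¬ G.Adj (x (m - 1)) a → ∃ i < s, x i = a := fun a ha hna => by
    by_contra! hc
    exact hna ((h.adj_last_iff hm hx hs a).2 ⟨ha, hc⟩)
  have not_adj_two : ∀ i j, i < j → j < s → G.Adj f (x i) → ¬ G.Adj f (x j) :=
    fun i j hij hj hi hj' => h.false_of_adj_of_adj hm hx hfK hf (by omega)
      (hs.mem (i + 1) (by omega)) (hs.mem j hj.le) (hx.ne (by omega) (by omega) (by omega))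
      (iff_of_false (hs.not_adj _ (by omega)) (hs.not_adj j hj)) hi hj'
  by_contra hnu
  obtain ⟨i, hi, rfl⟩ := exists_index u hu hnu
  by_cases hav : G.Adj (x (m - 1)) v
  · have hsK := hs.mem (s - 1) (by omega)
    have hns := hs.not_adj (s - 1) (by omega)
    have hy := hx.swap h.clique hsK hu fun j hj hjK => by
      rw [h.adj_iff_adj_last hm hx hj hjK, h.adj_iff_adj_last hm hx hj hjK, iff_false_left hns]
      exact hnu
    have hys : Equiv.swap (x (s - 1)) (x i) (x (s - 1 + 1)) = x s := by
      rw [Nat.sub_add_cancel hs0]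
      exact Equiv.swap_apply_of_ne_of_ne (hx.ne (by omega) (by omega) (by omega))
        (hx.ne (by omega) (by omega) (by omega))
    have hylast : Equiv.swap (x (s - 1)) (x i) (x (m - 1)) = x (m - 1) :=
      Equiv.swap_apply_of_ne_of_ne (hx.ne (by omega) (by omega) (by omega))
        (hx.ne (by omega) (by omega) (by omega))
    refine h.false_of_adj_of_adj hm hy hfK
      (fun j hj => swap_apply_ne_of_notMem hsK hu hfK (hf j hj)) (i := s - 1) (by omega)
      ?_ hv ?_ ?_ ?_ hfv
    · rw [hys]
      exact hs.mem s le_rfl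
    · rwa [Equiv.swap_apply_left, ne_comm]
    · rw [hys, hylast]
      exact iff_of_true hs.adj hav
    · rwa [Equiv.swap_apply_left]
  · obtain ⟨j, hj, rfl⟩ := exists_index v hv hav
    rcases lt_trichotomy i j with hij | rfl | hij
    · exact not_adj_two i j hij hj hfu hfv
    · exact huv rfl
    · exact not_adj_two j i hij hi hfv hfu

theorem adj_iff_of_last (h : ShortCycles G K w d m) (hm : m = w + d) (hx : IsPathFrom G K x m)
    {y : ℕ → V} (hy : IsPathFrom G K y m) (z : V) :
    G.Adj (y (m - 1)) z ↔ G.Adj (x (m - 1)) z := by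
  set f := y (m - 1)
  have hfK : f ∉ K := h.last_notMem hy
  by_cases hfx : ∃ i < m, x i = f
  · obtain ⟨i, hi, hif⟩ := hfx
    rw [← hif] at hfK ⊢
    exact h.adj_iff_adj_last hm hx hi hfK z
  push Not at hfx
  obtain ⟨s, hs⟩ := h.exists_cliqueSegment hy
  have hK : ∀ u, G.Adj f u → u ∈ K := fun u hu => ((h.adj_last_iff hm hy hs u).1 hu).1
  have hsub : G.neighborSet f ⊆ G.neighborSet (x (m - 1)) := fun u hu => by
    have hcard : 1 < (G.neighborSet f).ncard := by
      rw [h.ncard_neighborSet_last hy]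
      exact h.two_le_of_cliqueSegment hm hy hs
    obtain ⟨v, hv, hvu⟩ := Set.exists_ne_of_one_lt_ncard hcard u
    exact h.adj_last_of_adj hm hx hfK hfx (hK u hu) (hK v hv) hvu.symm hu hv
  have heq := Set.eq_of_subset_of_ncard_le hsub
    (by rw [h.ncard_neighborSet_last hx, h.ncard_neighborSet_last hy]) (Set.toFinite _)
  exact Set.ext_iff.1 heq z

theorem exists_common_nbrs (h : ShortCycles G K w d m) (hm : m = w + d)
    (hend : ∀ f ∉ K, ∃ x, IsPathFrom G K x m ∧ x (m - 1) = f) (hx : IsPathFrom G K x m) :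
    ∃ B ⊆ K, B.card = d ∧ ∀ f ∉ K, ∀ z, G.Adj f z ↔ z ∈ B := by
  classical
  obtain ⟨s, hs⟩ := h.exists_cliqueSegment hx
  refine ⟨(G.neighborSet (x (m - 1))).toFinset, fun z hz => ?_, ?_, fun f hf z => ?_⟩
  · rw [Set.mem_toFinset, mem_neighborSet, h.adj_last_iff hm hx hs] at hz
    exact hz.1
  · rw [← Set.ncard_eq_toFinset_card', h.ncard_neighborSet_last hx]
  · obtain ⟨y, hy, rfl⟩ := hend f hf
    rw [Set.mem_toFinset, mem_neighborSet, h.adj_iff_of_last hm hx hy]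

end ShortCycles

/-- The form of a longest path starting in `K` when it has more than `|K| + d` vertices: it visits
`K` in its first `s + 1` vertices and in `x (s + d)`, and the `d - 1` vertices behind the latter
are joined, besides each other, to `x s` and `x (s + d)` only. -/
structure TailShape {V : Type*} (G : SimpleGraph V) (K : Finset V) (d m s : ℕ) (x : ℕ → V) :
    Prop where
  length_eq : m = s + 2 * d
  mem_iff : ∀ i < m, x i ∈ K ↔ i ≤ s ∨ i = s + d
  adj_iff : ∀ i, i + 1 < m → (G.Adj (x (m - 1)) (x i) ↔ i = s ∨ s + d ≤ i)

theorem Crossing.cliqueSegment_le {V : Type*} {G : SimpleGraph V} {K : Finset V} {m p q s : ℕ}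
    {x : ℕ → V} (hpq : Crossing G K m x p q) (hs : CliqueSegment G K m x s) : s ≤ p :=
  not_lt.1 fun hc => hs.not_adj p hc hpq.adj

section LongPaths

variable {V : Type*} [Fintype V] {G : SimpleGraph V} {K : Finset V} {w d m p q p' q' s : ℕ}
  {x : ℕ → V}

namespace Crossing

theorem le_of_crossing (hpq : Crossing G K m x p q) (hpq' : Crossing G K m x p' q')
    (h : ShortCycles G K w d m) (hm : w + d < m) (hx : IsPathFrom G K x m) : p ≤ p' := by
  have := hpq.lt_length
  have hqm' := hpq'.lt_length
  have htight := (hpq.tight h hx).1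
  have htight' := (hpq'.tight h hx).1
  by_contra hlt
  rcases hpq.succ_mem_or_adj h hx (i := p' + 1) (by omega) (by omega) with hK | hadj
  · exact hpq'.not_mem _ (by omega) (by omega) hK
  · exact hpq'.not_adj _ (by omega) (by omega) hadj

theorem unique (hpq : Crossing G K m x p q) (hpq' : Crossing G K m x p' q')
    (h : ShortCycles G K w d m) (hm : w + d < m) (hx : IsPathFrom G K x m) :
    p = p' ∧ q = q' := by
  have hle := hpq.le_of_crossing hpq' h hm hx
  have hge := hpq'.le_of_crossing hpq h hm hx
  have hqm := hpq.lt_length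
  have hqm' := hpq'.lt_length
  have htight := (hpq.tight h hx).1
  have htight' := (hpq'.tight h hx).1
  omega

theorem right_succ_lt (hpq : Crossing G K m x p q) (h : ShortCycles G K w d m)
    (hx : IsPathFrom G K x m) : q + 1 < m := by
  have hqm := hpq.lt_length
  have hne : q ≠ m - 1 := by
    rintro rfl
    exact h.last_notMem hx hpq.mem
  omega

theorem mem_iff (hpq : Crossing G K m x p q) (hs : CliqueSegment G K m x s)
    (h : ShortCycles G K w d m) (hm : w + d < m) (hx : IsPathFrom G K x m) {i : ℕ} (hi : i < m) :
    x i ∈ K ↔ i ≤ s ∨ i = q := by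
  constructor
  · intro hiK
    by_contra! hc
    obtain ⟨p₁, q₁, -, hq₁, hcross⟩ := exists_crossing_of_lt hc.1 hi hs.adj hiK
    obtain ⟨-, rfl⟩ := hpq.unique hcross h hm hx
    rcases hpq.succ_mem_or_adj h hx (i := q) (by omega) (by omega) with hK | hadj
    · exact hs.not_mem_succ q ((hpq.cliqueSegment_le hs).trans hpq.lt.le) (by omega) hpq.mem hK
    · obtain ⟨p₂, q₂, hp₂, -, hcross⟩ := exists_crossing_of_lt (by omega) hi hadj hiK
      obtain ⟨rfl, -⟩ := hpq.unique hcross h hm hx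
      exact hp₂.not_gt hpq.lt
  · rintro (hi' | rfl)
    · exact hs.mem i hi'
    · exact hpq.mem

theorem adj_last_iff (hpq : Crossing G K m x p q) (hs : CliqueSegment G K m x s)
    (h : ShortCycles G K w d m) (hm : w + d < m) (hx : IsPathFrom G K x m) {i : ℕ}
    (hi : i + 1 < m) : G.Adj (x (m - 1)) (x i) ↔ s ≤ i ∧ i ≤ p ∨ q ≤ i := by
  refine ⟨fun hadj => ?_, fun hc => ?_⟩
  · have hsi : ¬ i < s := fun hc => hs.not_adj i hc hadj
    have hpqi : ¬ (p < i ∧ i < q) := fun hc => hpq.not_adj i hc.1 hc.2 hadj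
    omega
  · have hle := hpq.add_two_le h hx
    have hsp := hpq.cliqueSegment_le hs
    refine (hpq.succ_mem_or_adj h hx (by omega) hi).resolve_left fun hK => ?_
    have := (hpq.mem_iff hs h hm hx hi).1 hK
    omega

theorem cliqueSegment_add_two (hpq : Crossing G K m x p q) (hs : CliqueSegment G K m x s)
    (h : ShortCycles G K w d m) (hm : w + d < m) (hx : IsPathFrom G K x m) : s + 2 = w := by
  classical
  have hqm := hpq.lt_length
  have hsq := (hpq.cliqueSegment_le hs).trans_lt hpq.lt
  have hK : K = (insert q (Finset.range (s + 1))).image x := by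
    ext a
    rw [Finset.mem_image]
    constructor
    · intro ha
      obtain ⟨i, hi, rfl⟩ := h.exists_index_of_mem hx ha
      refine ⟨i, ?_, rfl⟩
      have := (hpq.mem_iff hs h hm hx hi).1 ha
      rw [Finset.mem_insert, Finset.mem_range]
      omega
    · rintro ⟨i, hi, rfl⟩
      rw [Finset.mem_insert, Finset.mem_range] at hi
      exact (hpq.mem_iff hs h hm hx (by omega)).2 (by omega)
  rw [← h.card_eq hx, hK, Finset.card_image_of_injOn, Finset.card_insert_of_notMem,
    Finset.card_range]
  · rw [Finset.mem_range]
    omega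
  · intro i hi j hj hij
    simp only [Finset.coe_insert, Finset.coe_range, Set.mem_insert_iff, Set.mem_Iio] at hi hj
    exact hx.inj (by omega) (by omega) hij

/-- Rotating the path at `x p` moves the crossing from `p < q` to `p < m + p - q`; both are
tight, so `q` lies halfway between `p` and `m`. -/
theorem right_eq (hpq : Crossing G K m x p q) (hs : CliqueSegment G K m x s)
    (h : ShortCycles G K w d m) (hm : w + d < m) (hx : IsPathFrom G K x m) : q = s + d := by
  have hqm := hpq.right_succ_lt h hx
  have hle := hpq.add_two_le h hx
  have hsp := hpq.cliqueSegment_le hs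
  have hsw := hpq.cliqueSegment_add_two hs h hm hx
  have hy := hx.posaRotate (p := p) (by omega) hpq.adj
  obtain ⟨p', q', hpq'⟩ := h.exists_crossing hy
  obtain ⟨s', hs'⟩ := h.exists_cliqueSegment hy
  have hqm' := hpq'.right_succ_lt h hy
  have hsw' := hpq'.cliqueSegment_add_two hs' h hm hy
  have hp : s' ≤ p ∧ p ≤ p' ∨ q' ≤ p := by
    refine (hpq'.adj_last_iff hs' h hm hy (by omega)).1 ?_
    rw [IsPathSeq.posaRotate_last (by omega), IsPathSeq.posaRotate_of_le le_rfl]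
    exact (hx.adj (by omega)).symm
  have hp_succ : ¬ (s' ≤ p + 1 ∧ p + 1 ≤ p' ∨ q' ≤ p + 1) := by
    rw [← hpq'.adj_last_iff hs' h hm hy (by omega), IsPathSeq.posaRotate_last (by omega),
      IsPathSeq.posaRotate_of_lt (by omega), show m + p - (p + 1) = m - 1 by omega]
    exact fun hc => hpq.not_adj (p + 1) (by omega) (by omega) hc.symm
  have hq := hpq'.mem
  rw [IsPathSeq.posaRotate_of_lt (by omega), hpq.mem_iff hs h hm hx (by omega)] at hq
  have htight := (hpq.tight h hx).1
  have htight' := (hpq'.tight h hy).1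
  omega

end Crossing

namespace ShortCycles

theorem tailShape (h : ShortCycles G K (s + 2) d m) (hm : s + 2 + d < m)
    (hx : IsPathFrom G K x m) : TailShape G K d m s x := by
  obtain ⟨p, q, hpq⟩ := h.exists_crossing hx
  obtain ⟨s₁, hs⟩ := h.exists_cliqueSegment hx
  obtain rfl : s₁ = s := by
    have := hpq.cliqueSegment_add_two hs h hm hx
    omega
  obtain rfl := hpq.right_eq hs h hm hx
  have hsm := hs.lt_length
  have := hpq.right_succ_lt h hx
  have hy := hx.posaRotate (by omega) hs.adj
  obtain ⟨p', q', hpq'⟩ := h.exists_crossing hy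
  obtain ⟨s', hs'⟩ := h.exists_cliqueSegment hy
  have hsw' := hpq'.cliqueSegment_add_two hs' h hm hy
  obtain rfl := hpq'.right_eq hs' h hm hy
  have := hpq'.right_succ_lt h hy
  have hlt' := (hpq'.cliqueSegment_le hs').trans_lt hpq'.lt
  have hq := hpq'.mem
  rw [IsPathSeq.posaRotate_of_lt (by omega), hpq.mem_iff hs h hm hx (by omega)] at hq
  have htight := (hpq.tight h hx).1
  refine ⟨by omega, fun i hi => hpq.mem_iff hs h hm hx hi, fun i hi => ?_⟩
  rw [hpq.adj_last_iff hs h hm hx hi]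
  omega

end ShortCycles

end LongPaths

/-- `W` consists of `d - 1` vertices outside `K`, which are joined to each other, to `u` and to
`v`, and to nothing else. -/
structure IsBlock {V : Type*} (G : SimpleGraph V) (K : Finset V) (d : ℕ) (u v : V)
    (W : Finset V) : Prop where
  card : W.card = d - 1
  not_mem : ∀ g ∈ W, g ∉ K
  adj_iff : ∀ g ∈ W, ∀ z, G.Adj g z ↔ z ≠ g ∧ (z = u ∨ z = v ∨ z ∈ W)

section Blocks

variable {V : Type*} {G : SimpleGraph V} {K : Finset V} {x : ℕ → V} {d m a p : ℕ}

theorem IsBlock.symm {u v : V} {W : Finset V} (hW : IsBlock G K d u v W) : IsBlock G K d v u W :=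
  ⟨hW.card, hW.not_mem, fun g hg z => (hW.adj_iff g hg z).trans (and_congr_right' or_left_comm)⟩

theorem image_posaRotate_of_le [DecidableEq V] (hap : a ≤ p) :
    (Finset.Ioo a m).image (IsPathSeq.posaRotate x m p) = (Finset.Ioo a m).image x := by
  ext z
  simp only [Finset.mem_image, Finset.mem_Ioo, IsPathSeq.posaRotate]
  constructor
  · rintro ⟨i, hi, rfl⟩
    refine ⟨_, ?_, rfl⟩
    split_ifs <;> omega
  · rintro ⟨i, hi, rfl⟩
    refine ⟨if i ≤ p then i else m + p - i, ?_, congrArg x ?_⟩ <;> split_ifs <;> omega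

theorem image_posaRotate_of_ge [DecidableEq V] (hpa : p ≤ a) :
    (Finset.Ioo a m).image (IsPathSeq.posaRotate x m p) =
      (Finset.Ioo p (m + p - a)).image x := by
  ext z
  simp only [Finset.mem_image, Finset.mem_Ioo]
  constructor
  · rintro ⟨i, hi, rfl⟩
    exact ⟨m + p - i, by omega, (IsPathSeq.posaRotate_of_lt (by omega)).symm⟩
  · rintro ⟨i, hi, rfl⟩
    refine ⟨m + p - i, by omega, ?_⟩
    rw [IsPathSeq.posaRotate_of_lt (by omega), show m + p - (m + p - i) = i by omega]

end Blocks

namespace ShortCycles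

variable {V : Type*} [Fintype V] {G : SimpleGraph V} {K : Finset V} {d m s : ℕ} {x : ℕ → V}

theorem adj_last_iff_of_tailShape [DecidableEq V] (h : ShortCycles G K (s + 2) d m)
    (hm : s + 2 + d < m) (hx : IsPathFrom G K x m) (z : V) :
    G.Adj (x (m - 1)) z ↔
      z ≠ x (m - 1) ∧ (z = x s ∨ z = x (s + d) ∨ z ∈ (Finset.Ioo (s + d) m).image x) := by
  have hshape := h.tailShape hm hx
  have hlength := hshape.length_eq
  simp only [Finset.mem_image, Finset.mem_Ioo]
  refine ⟨fun hz => ⟨hz.ne', ?_⟩, ?_⟩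
  · obtain ⟨i, hi, rfl⟩ := h.exists_index_of_adj hx hz
    rcases (hshape.adj_iff i (succ_lt_of_adj_last hi hz)).1 hz with rfl | hle
    · exact Or.inl rfl
    rcases hle.eq_or_lt with rfl | hlt
    · exact Or.inr (Or.inl rfl)
    · exact Or.inr (Or.inr ⟨i, ⟨hlt, hi⟩, rfl⟩)
  · rintro ⟨hz, rfl | rfl | ⟨i, ⟨hi, him⟩, rfl⟩⟩
    · exact (hshape.adj_iff s (by omega)).2 (Or.inl rfl)
    · exact (hshape.adj_iff (s + d) (by omega)).2 (Or.inr le_rfl)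
    · have hne : i ≠ m - 1 := fun hc => hz (congrArg x hc)
      exact (hshape.adj_iff i (by omega)).2 (Or.inr hi.le)

/-- Every vertex behind `x (s + d)` is the last one of a rotated path with the same tail. -/
theorem isBlock_tail [DecidableEq V] (h : ShortCycles G K (s + 2) d m) (hm : s + 2 + d < m)
    (hx : IsPathFrom G K x m) :
    IsBlock G K d (x s) (x (s + d)) ((Finset.Ioo (s + d) m).image x) := by
  have hshape := h.tailShape hm hx
  have hlength := hshape.length_eq
  refine ⟨?_, fun g hg => ?_, fun g hg z => ?_⟩
  · rw [Finset.card_image_of_injOn, Nat.card_Ioo]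
    · omega
    · intro i hi j hj hij
      rw [Finset.mem_coe, Finset.mem_Ioo] at hi hj
      exact hx.inj hi.2 hj.2 hij
  · obtain ⟨i, hi, rfl⟩ := Finset.mem_image.1 hg
    rw [Finset.mem_Ioo] at hi
    rw [hshape.mem_iff i hi.2]
    omega
  · obtain ⟨i, hi, rfl⟩ := Finset.mem_image.1 hg
    rw [Finset.mem_Ioo] at hi
    rcases eq_or_ne i (m - 1) with rfl | -
    · exact h.adj_last_iff_of_tailShape hm hx z
    have hadj := (hshape.adj_iff (i - 1) (by omega)).2 (by omega)
    have hiff := h.adj_last_iff_of_tailShape hm (hx.posaRotate (by omega) hadj) z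
    rwa [IsPathSeq.posaRotate_last (by omega), IsPathSeq.posaRotate_of_le (by omega),
      IsPathSeq.posaRotate_of_le (by omega), image_posaRotate_of_le (by omega),
      Nat.sub_add_cancel (by omega)] at hiff

theorem isBlock_middle [DecidableEq V] (h : ShortCycles G K (s + 2) d m) (hm : s + 2 + d < m)
    (hx : IsPathFrom G K x m) :
    IsBlock G K d (x s) (x (s + d)) ((Finset.Ioo s (s + d)).image x) := by
  have hshape := h.tailShape hm hx
  have hlength := hshape.length_eq
  have hadj := (hshape.adj_iff s (by omega)).2 (Or.inl rfl)
  have hblock := h.isBlock_tail hm (hx.posaRotate (by omega) hadj)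
  rwa [IsPathSeq.posaRotate_of_le le_rfl, IsPathSeq.posaRotate_of_lt (by omega),
    image_posaRotate_of_ge (by omega), show m + s - (s + d) = s + d by omega] at hblock

theorem exists_block_of_index (h : ShortCycles G K (s + 2) d m) (hm : s + 2 + d < m)
    (hx : IsPathFrom G K x m) {i : ℕ} (hi : i < m) (hiK : x i ∉ K) :
    ∃ W, IsBlock G K d (x s) (x (s + d)) W ∧ x i ∈ W := by
  classical
  rw [(h.tailShape hm hx).mem_iff i hi] at hiK
  rcases lt_or_ge i (s + d) with hlt | hge
  · exact ⟨_, h.isBlock_middle hm hx, Finset.mem_image_of_mem _ (Finset.mem_Ioo.2 (by omega))⟩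
  · exact ⟨_, h.isBlock_tail hm hx, Finset.mem_image_of_mem _ (Finset.mem_Ioo.2 (by omega))⟩

theorem eq_of_adj_last_of_eqOn (h : ShortCycles G K (s + 2) d m) (hm : s + 2 + d < m)
    (hx : IsPathFrom G K x m) {z : ℕ → V} {l : ℕ} (hz : IsPathSeq G z l) (hl : s + 2 + d ≤ l)
    (hzx : ∀ i ≤ s + d, z i = x i) {i : ℕ} (hi : i < s + d) (hadj : G.Adj (z (l - 1)) (z i)) :
    i = s := by
  classical
  have hshape := h.tailShape hm hx
  have hlength := hshape.length_eq
  rcases lt_trichotomy i s with his | rfl | his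
  · have hmem : ∀ j, 0 ≤ j → j < s + 1 → z j ∈ K := fun j _ hj => by
      rw [hzx j (by omega), hshape.mem_iff j (by omega)]
      omega
    have hpath := hz.permute (e := 0) (f := s + 1) h.clique (by omega) hmem (Equiv.swap 0 i)
      (fun j hj => Equiv.swap_apply_of_ne_of_ne (by omega) (by omega)) (by omega)
      (fun _ => Equiv.swap_apply_of_ne_of_ne (by omega) (by omega))
    have := h.cycle_lt_add l ⟨_, hpath, by omega, by
      rwa [Equiv.swap_apply_left, Equiv.swap_apply_of_ne_of_ne (by omega) (by omega)]⟩
    omega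
  · rfl
  · have hblock := h.isBlock_middle hm hx
    rw [hzx i hi.le] at hadj
    have hne : ∀ j ≤ s + d, z (l - 1) ≠ x j := fun j hj => by
      rw [← hzx j hj]
      exact hz.ne (by omega) (by omega) (by omega)
    have hiW := Finset.mem_image_of_mem x (Finset.mem_Ioo.2 ⟨his, hi⟩)
    rcases ((hblock.adj_iff _ hiW _).1 hadj.symm).2 with hc | hc | hc
    · exact (hne s (by omega) hc).elim
    · exact (hne (s + d) le_rfl hc).elim
    · obtain ⟨j, hj, hc⟩ := Finset.mem_image.1 hc
      exact (hne j (Finset.mem_Ioo.1 hj).2.le hc.symm).elim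

/-- Continuing greedily from `x 0, …, x (s + d), f` yields another longest path. -/
theorem exists_isPathFrom_of_adj (h : ShortCycles G K (s + 2) d m) (hm : s + 2 + d < m)
    (hx : IsPathFrom G K x m) {f : V} (hf : ∀ i < m, x i ≠ f) (hadj : G.Adj (x (s + d)) f) :
    ∃ z, IsPathFrom G K z m ∧ (∀ i ≤ s + d, z i = x i) ∧ z (s + d + 1) = f := by
  have hstart : IsPathSeq G (catSeq x (s + d + 1) fun _ => f) (s + 2 + d) := by
    have := (hx.take (a := s + d + 1) (by omega)).cat (IsPathSeq.const f) (fun _ _ => hadj)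
      fun i hi _ _ => hf i (by omega)
    rwa [show s + d + 1 + 1 = s + 2 + d by omega] at this
  obtain ⟨l, hl, -, ⟨z, hz, hzx, hzf⟩, hmax⟩ := exists_greatest_lt (b := m + 1)
    (P := fun l => ∃ z, IsPathSeq G z l ∧ (∀ i ≤ s + d, z i = x i) ∧ z (s + d + 1) = f)
    (show s + 2 + d < m + 1 by omega)
    ⟨_, hstart, fun i hi => catSeq_of_lt (by omega), catSeq_of_le le_rfl⟩
  have hz0 : IsPathFrom G K z l := ⟨hz, hzx 0 (Nat.zero_le _) ▸ hx.zero_mem⟩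
  have hclosed : ∀ a, G.Adj (z (l - 1)) a → ∃ i < l, z i = a := fun a ha => by
    by_contra! hc
    have hcat := hz.cat (IsPathSeq.const a) (fun _ _ => ha) fun i hi _ _ => hc i hi
    have hcat_zero : catSeq z l (fun _ => a) 0 = z 0 := catSeq_of_lt (by omega)
    have := h.longest _ _ ⟨hcat, hcat_zero ▸ hz0.zero_mem⟩
    refine hmax (l + 1) (by omega) (by omega) ⟨_, hcat, fun i hi => ?_, ?_⟩
    · rw [catSeq_of_lt (by omega), hzx i hi]
    · rw [catSeq_of_lt (by omega), hzf]
  have hdeg : (G.neighborSet (z (l - 1))).ncard ≤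
      (insert s (Finset.Ico (s + d) (l - 1))).card := by
    refine ncard_le_card_of_forall_exists (x := z) fun a ha => ?_
    obtain ⟨i, hi, rfl⟩ := hclosed a ha
    have hil := succ_lt_of_adj_last hi ha
    refine ⟨i, ?_, rfl⟩
    rw [Finset.mem_insert, Finset.mem_Ico]
    by_cases hlt : i < s + d
    · exact Or.inl (h.eq_of_adj_last_of_eqOn hm hx hz hl hzx hlt ha)
    · exact Or.inr ⟨not_lt.1 hlt, by omega⟩
  have hinsert := Finset.card_insert_le s (Finset.Ico (s + d) (l - 1))
  rw [Nat.card_Ico] at hinsert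
  have hd := h.degree_le (z (l - 1))
  have hlm := h.longest z l hz0
  have hlength := (h.tailShape hm hx).length_eq
  obtain rfl : l = m := by omega
  exact ⟨z, hz0, hzx, hzf⟩

theorem exists_block_of_adj_right (h : ShortCycles G K (s + 2) d m) (hm : s + 2 + d < m)
    (hx : IsPathFrom G K x m) {f : V} (hfK : f ∉ K) (hadj : G.Adj (x (s + d)) f) :
    ∃ W, IsBlock G K d (x s) (x (s + d)) W ∧ f ∈ W := by
  by_cases hfx : ∃ i < m, x i = f
  · obtain ⟨i, hi, rfl⟩ := hfx
    exact h.exists_block_of_index hm hx hi hfK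
  push Not at hfx
  obtain ⟨z, hz, hzx, rfl⟩ := h.exists_isPathFrom_of_adj hm hx hfx hadj
  rw [← hzx s (by omega), ← hzx (s + d) le_rfl]
  exact h.exists_block_of_index hm hz (by omega) hfK

theorem exists_block_of_adj_left (h : ShortCycles G K (s + 2) d m) (hm : s + 2 + d < m)
    (hx : IsPathFrom G K x m) {f : V} (hfK : f ∉ K) (hadj : G.Adj (x s) f) :
    ∃ W, IsBlock G K d (x s) (x (s + d)) W ∧ f ∈ W := by
  classical
  have hshape := h.tailShape hm hx
  have hlength := hshape.length_eq
  have hleft := (hshape.mem_iff s (by omega)).2 (Or.inl le_rfl)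
  have hright := (hshape.mem_iff (s + d) (by omega)).2 (Or.inr rfl)
  have hy := hx.swap h.clique hleft hright fun i hi hiK => by
    obtain ⟨W, hW, hiW⟩ := h.exists_block_of_index hm hx hi hiK
    simp only [hW.adj_iff _ hiW, ne_of_mem_of_not_mem hleft hiK,
      ne_of_mem_of_not_mem hright hiK, ne_eq, not_false_eq_true, true_or, or_true, and_self]
  obtain ⟨W, hW, hfW⟩ := h.exists_block_of_adj_right hm hy hfK (by rwa [Equiv.swap_apply_right])
  rw [Equiv.swap_apply_left, Equiv.swap_apply_right] at hW
  exact ⟨W, hW.symm, hfW⟩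

end ShortCycles

theorem TwoConnected.exists_isPathSeq_through {V : Type*} [Fintype V] {G : SimpleGraph V}
    (h : TwoConnected G) {S : Set V} {f u v : V} (hf : f ∈ S) (hu : u ∉ S) (hv : v ∉ S)
    (huv : u ≠ v) :
    ∃ (y : ℕ → V) (l : ℕ) (a b : V), IsPathSeq G y (l + 1) ∧ (∀ i ≤ l, y i ∈ S) ∧ a ∉ S ∧ b ∉ S ∧
      a ≠ b ∧ G.Adj a (y 0) ∧ G.Adj (y l) b := by
  obtain ⟨z, _ | l, hz, hzS, hza, hzu, -, hz_in⟩ := h.exists_isPathSeq_between u (B := Sᶜ)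
    ⟨f, hf, ne_of_mem_of_not_mem hf hu⟩ ⟨v, hv, huv.symm⟩
  · exact (hza hzS).elim
  have hzl : z l ∈ S := not_not.1 (hz_in l (by omega))
  obtain ⟨y, _ | k, hy, hy0, hyb, hya, -, hy_in⟩ := h.exists_isPathSeq_between (z (l + 1))
    (A := {s | s ∈ S ∧ G.Adj (z (l + 1)) s}) (B := Sᶜ)
    ⟨z l, ⟨hzl, (hz.adj (by omega)).symm⟩, ne_of_mem_of_not_mem hzl hza⟩
    ⟨u, hu, (hzu _).symm⟩
  · exact (hyb hy0.1).elim
  · exact ⟨y, k, z (l + 1), y (k + 1), hy.take (by omega),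
      fun i hi => not_not.1 (hy_in i (by omega)), hza, hyb, (hya _).symm, hy0.2,
      hy.adj (by omega)⟩

theorem exists_perm_apply_zero_one {i j s : ℕ} (hi : i < s) (hj : j < s) (hij : i ≠ j) :
    ∃ σ : Equiv.Perm ℕ, σ 0 = i ∧ σ 1 = j ∧ ∀ k ≥ s, σ k = k := by
  refine ⟨Equiv.swap 0 i * Equiv.swap 1 (Equiv.swap 0 i j), ?_, ?_, fun k hk => ?_⟩
  all_goals
    simp only [Equiv.Perm.coe_mul, Function.comp_apply, Equiv.swap_apply_def]
    grind

namespace ShortCycles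

variable {V : Type*} [Fintype V] {G : SimpleGraph V} {K : Finset V} {d m s : ℕ} {x : ℕ → V}

/-- Otherwise `y` could be inserted into `x`, after moving `x i` and `x j` to its front. -/
theorem exists_eq_of_adj_of_adj (h : ShortCycles G K (s + 2) d m) (hm : s + 2 + d < m)
    (hx : IsPathFrom G K x m) {i j l : ℕ} {y : ℕ → V} (hi : i < s) (hj : j < s) (hij : i ≠ j)
    (hy : IsPathSeq G y (l + 1)) (hyi : G.Adj (x i) (y 0)) (hyj : G.Adj (y l) (x j)) :
    ∃ a < m, ∃ b ≤ l, x a = y b := by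
  by_contra! hne
  have hmem : ∀ k < s + 1, x k ∈ K := fun k hk =>
    ((h.tailShape hm hx).mem_iff k (by omega)).2 (by omega)
  obtain ⟨σ, hσ0, hσ1, hσ⟩ := exists_perm_apply_zero_one hi hj hij
  have hlt : ∀ k < m, σ k < m := fun k hk => by
    by_contra hc
    have := σ.injective (hσ (σ k) (by omega))
    omega
  have hpath := hx.permute (e := 0) (f := s + 1) h.clique (by omega) (fun k _ => hmem k) σ
    (fun k hk => hσ k (by omega)) (by omega) fun _ => hσ _ (by omega)
  have hcat := ((hpath.take (a := 1) (by omega)).cat hy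
    (fun _ _ => by simpa only [hσ0] using hyi)
    (fun a ha b hb => hne _ (hlt a (by omega)) b (by omega))).cat
    (hpath.drop (a := m - 1) 1 (by omega))
    (fun _ _ => by
      simpa only [catSeq_last (Nat.add_one_pos l), add_tsub_cancel_right, hσ1] using hyj)
    (fun a ha b hb => by
      rcases Nat.lt_or_ge a 1 with hlt1 | hge1
      · rw [catSeq_of_lt hlt1]
        exact hpath.ne (by omega) (by omega) (by omega)
      · rw [catSeq_of_le hge1]
        exact (hne _ (hlt _ (by omega)) _ (by omega)).symm)
  have := h.longest _ _ ⟨hcat, by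
    rw [catSeq_of_lt (by omega), catSeq_of_lt (by omega), hσ0]
    exact hmem i (by omega)⟩
  omega

theorem exists_index_of_adj_of_forall_not_isBlock (h : ShortCycles G K (s + 2) d m)
    (hm : s + 2 + d < m) (hx : IsPathFrom G K x m) {f g : V} (hfK : f ∉ K)
    (hf : ∀ W, IsBlock G K d (x s) (x (s + d)) W → f ∉ W) (hfg : G.Adj f g)
    (hg : g ∉ K → ∃ W, IsBlock G K d (x s) (x (s + d)) W ∧ g ∈ W) : ∃ i < s, x i = g := by
  have hshape := h.tailShape hm hx
  have hlength := hshape.length_eq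
  have hgK : g ∈ K := by
    by_contra hgK
    obtain ⟨W, hW, hgW⟩ := hg hgK
    rcases ((hW.adj_iff g hgW f).1 hfg.symm).2 with rfl | rfl | hfW
    · exact hfK ((hshape.mem_iff s (by omega)).2 (by omega))
    · exact hfK ((hshape.mem_iff (s + d) (by omega)).2 (by omega))
    · exact hf W hW hfW
  obtain ⟨i, him, rfl⟩ := h.exists_index_of_mem hx hgK
  refine ⟨i, ?_, rfl⟩
  by_contra his
  obtain ⟨W, hW, hfW⟩ : ∃ W, IsBlock G K d (x s) (x (s + d)) W ∧ f ∈ W := by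
    rcases (hshape.mem_iff i him).1 hgK with hi | rfl
    · obtain rfl : i = s := by omega
      exact h.exists_block_of_adj_left hm hx hfK hfg.symm
    · exact h.exists_block_of_adj_right hm hx hfK hfg.symm
  exact hf W hW hfW

theorem exists_block (h : ShortCycles G K (s + 2) d m) (hm : s + 2 + d < m)
    (hx : IsPathFrom G K x m) {f : V} (hf : f ∉ K) :
    ∃ W, IsBlock G K d (x s) (x (s + d)) W ∧ f ∈ W := by
  have hshape := h.tailShape hm hx
  have hlength := hshape.length_eq
  let S : Set V := {f | f ∉ K ∧ ∀ W, IsBlock G K d (x s) (x (s + d)) W → f ∉ W}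
  have hS : ∀ g ∉ S, g ∉ K → ∃ W, IsBlock G K d (x s) (x (s + d)) W ∧ g ∈ W := by
    intro g hg hgK
    by_contra! hc
    exact hg ⟨hgK, hc⟩
  refine hS f (fun hfS => ?_) hf
  have hxS : ∀ a < m, x a ∉ S := fun a ha hc => by
    obtain ⟨W, hW, haW⟩ := h.exists_block_of_index hm hx ha hc.1
    exact hc.2 W hW haW
  obtain ⟨y, l, a, b, hy, hyS, haS, hbS, hab, hay, hyb⟩ :=
    h.twoConnected.exists_isPathSeq_through hfS (hxS 0 (by omega)) (hxS 1 (by omega))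
      (hx.ne (by omega) (by omega) zero_ne_one)
  obtain ⟨i, hi, rfl⟩ := h.exists_index_of_adj_of_forall_not_isBlock hm hx
    (hyS 0 (Nat.zero_le l)).1 (hyS 0 (Nat.zero_le l)).2 hay.symm (hS a haS)
  obtain ⟨j, hj, rfl⟩ := h.exists_index_of_adj_of_forall_not_isBlock hm hx
    (hyS l le_rfl).1 (hyS l le_rfl).2 hyb (hS b hbS)
  obtain ⟨a, ha, b, hb, he⟩ := h.exists_eq_of_adj_of_adj hm hx hi hj
    (fun hc => hab (congrArg x hc)) hy hay hyb
  exact hxS a ha (he ▸ hyS b hb)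

end ShortCycles

/-- The vertices outside `K` are partitioned into at least two blocks with `d - 1 ≥ 2` vertices,
all attached to the same two vertices of `K`. -/
structure HasBlocks {V : Type*} [Fintype V] (G : SimpleGraph V) (K : Finset V) (d : ℕ)
    (u v : V) : Prop where
  left_mem : u ∈ K
  right_mem : v ∈ K
  ne : u ≠ v
  three_le : 3 ≤ d
  card_le : K.card + 2 * (d - 1) ≤ Fintype.card V
  exists_block : ∀ f ∉ K, ∃ W, IsBlock G K d u v W ∧ f ∈ W

theorem ShortCycles.exists_hasBlocks {V : Type*} [Fintype V] {G : SimpleGraph V} {K : Finset V}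
    {w d m : ℕ} {x : ℕ → V} (h : ShortCycles G K w d m) (hm : w + d < m)
    (hx : IsPathFrom G K x m) : ∃ u v, HasBlocks G K d u v := by
  obtain ⟨s, rfl⟩ := Nat.exists_eq_add_of_le' h.two_le
  have hshape := h.tailShape hm hx
  have hlength := hshape.length_eq
  have hcard := hx.length_le_card
  have hK := h.card_eq hx
  exact ⟨x s, x (s + d), (hshape.mem_iff s (by omega)).2 (by omega),
    (hshape.mem_iff (s + d) (by omega)).2 (by omega), hx.ne (by omega) (by omega) (by omega),
    by omega, by omega, fun f hf => h.exists_block hm hx hf⟩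

section EdgeMaximal

variable {V : Type*} {G H : SimpleGraph V} {c : ℕ → V} {a b : V} {l M : ℕ}

theorem IsCycleSeq.rotate (hc : IsCycleSeq G c l) {i : ℕ} (hi : i + 1 < l) :
    IsCycleSeq G (catSeq (fun j => c (i + 1 + j)) (l - (i + 1)) c) l := by
  have hcat := (hc.drop (a := l - (i + 1)) (i + 1) (by omega)).cat (hc.take hi.le)
    (fun _ _ => by
      rw [show i + 1 + (l - (i + 1) - 1) = l - 1 by omega]
      exact hc.closes)
    fun j hj k hk => hc.ne (by omega) (by omega) (by omega)
  rw [Nat.sub_add_cancel hi.le] at hcat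
  refine ⟨hcat, hc.three_le, ?_⟩
  rw [catSeq_of_le (by omega), catSeq_of_lt (by omega), Nat.add_zero]
  exact hc.adj_of_succ_eq hi (by omega)

theorem IsCycleSeq.exists_not_adj (hc : IsCycleSeq H c l) (hG : ¬ HasCycle G l) :
    ∃ c', IsCycleSeq H c' l ∧ ¬ G.Adj (c' (l - 1)) (c' 0) := by
  by_cases hadj : G.Adj (c (l - 1)) (c 0)
  · obtain ⟨i, hi, hnot⟩ : ∃ i, i + 1 < l ∧ ¬ G.Adj (c i) (c (i + 1)) := by
      by_contra! hcon
      exact hG ⟨c, ⟨hc.inj, hcon⟩, hc.three_le, hadj⟩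
    refine ⟨_, hc.rotate hi, ?_⟩
    rwa [catSeq_of_le (by omega), catSeq_of_lt (by omega), Nat.add_zero,
      show l - 1 - (l - (i + 1)) = i by omega]
  · exact ⟨c, hc, hadj⟩

theorem exists_isPathSeq_of_hasCycle_sup_edge (hc : HasCycle (G ⊔ edge a b) l)
    (hG : ¬ HasCycle G l) : ∃ z, IsPathSeq G z l ∧ z 0 = a ∧ z (l - 1) = b := by
  obtain ⟨c, hc⟩ := hc
  obtain ⟨z, hz, hclose⟩ := hc.exists_not_adj hG
  have hl := hz.three_le
  have hnew : ∀ i j, (G ⊔ edge a b).Adj (z i) (z j) → ¬ G.Adj (z i) (z j) →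
      z i = a ∧ z j = b ∨ z i = b ∧ z j = a := fun i j hH hnot =>
    ((edge_adj ..).1 ((sup_adj ..).1 hH |>.resolve_left hnot)).1
  have hends := hnew _ _ hz.closes hclose
  have hpath : IsPathSeq G z l := by
    refine ⟨hz.inj, fun i hi => ?_⟩
    by_contra hnot
    have hpair : z i = z (l - 1) ∨ z i = z 0 ∧ z (i + 1) = z (l - 1) := by
      have := hnew _ _ (hz.adj hi) hnot
      grind
    rcases hpair with hlast | ⟨hzero, hlast⟩
    · exact hz.ne (by omega) (by omega) (by omega) hlast
    · obtain rfl := hz.inj (by omega) (by omega) hzero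
      exact hz.ne (by omega) (by omega) (by omega) hlast
  rcases hends with ⟨hb, ha⟩ | ⟨hb, ha⟩
  · exact ⟨_, hpath.backwards (l - 1) (by omega) (by omega), hb, by rwa [Nat.sub_self]⟩
  · exact ⟨z, hpath, ha, hb⟩

theorem exists_isPathSeq_of_maximal
    (hG : Maximal (fun H : SimpleGraph V => ∀ l, HasCycle H l → l < M) G) (hab : a ≠ b)
    (hadj : ¬ G.Adj a b) : ∃ z, ∃ l ≥ M, IsPathSeq G z l ∧ z 0 = a ∧ z (l - 1) = b := by
  have hnot := hG.not_prop_of_gt (lt_sup_edge G a b hab hadj)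
  push Not at hnot
  obtain ⟨l, hc, hl⟩ := hnot
  obtain ⟨z, hz⟩ := exists_isPathSeq_of_hasCycle_sup_edge hc fun hGl => (hG.prop l hGl).not_ge hl
  exact ⟨z, l, hl, hz⟩

theorem exists_not_adj_of_maximal_isClique {K : Finset V}
    (hK : Maximal (fun L : Finset V => G.IsClique L) K) (hb : b ∉ K) :
    ∃ a ∈ K, ¬ G.Adj a b := by
  classical
  by_contra! hc
  refine hb (hK.le_of_ge (y := insert b K) ?_ (Finset.subset_insert b K)
    (Finset.mem_insert_self b K))
  rw [Finset.coe_insert, isClique_insert]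
  exact ⟨hK.prop, fun a ha _ => (hc a ha).symm⟩

theorem hasCycle_card_of_isClique_univ [Fintype V] (hcard : 3 ≤ Fintype.card V)
    (hG : G.IsClique Set.univ) : HasCycle G (Fintype.card V) := by
  obtain ⟨a, b, hab⟩ := Fintype.one_lt_card_iff.1 (show 1 < Fintype.card V by omega)
  obtain ⟨c, hc, -, ha, hb⟩ := exists_isPathSeq_of_isClique (K := Finset.univ)
    (by rwa [Finset.coe_univ]) (Finset.mem_univ a) (Finset.mem_univ b) hab
  exact ⟨c, hc, hcard, by
    rw [← Finset.card_univ, ha, hb]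
    exact hG (Set.mem_univ b) (Set.mem_univ a) hab.symm⟩

end EdgeMaximal

theorem adj_iff_adj_of_ncard_le {V : Type*} [Finite V] {G H : SimpleGraph V} {f : V} {d : ℕ}
    (hGH : G ≤ H) (hG : d ≤ (G.neighborSet f).ncard) (hH : (H.neighborSet f).ncard ≤ d) (z : V) :
    G.Adj f z ↔ H.Adj f z :=
  Set.ext_iff.1 (Set.eq_of_subset_of_ncard_le (fun _ hz => hGH hz) (hH.trans hG)) z

section Structure

variable {V : Type*} [Fintype V] {G H : SimpleGraph V} {K : Finset V} {d : ℕ} {u v f : V}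

theorem exists_shortCycles (h2c : TwoConnected G) (hK : G.IsClique K) (hK2 : 2 ≤ K.card)
    (hd : 1 ≤ d) (hdeg : ∀ v, d ≤ (G.neighborSet v).ncard)
    (hcyc : ∀ l, HasCycle G l → l < min (Fintype.card V) (K.card + d)) :
    ∃ H ≥ G, ∃ m, ShortCycles H K K.card d m ∧ (∃ x, IsPathFrom H K x m) ∧
      ∀ f ∉ K, ∃ z, ∃ l ≥ min (Fintype.card V) (K.card + d), IsPathFrom H K z l ∧
        z (l - 1) = f := by
  have hn := h2c.1
  obtain ⟨H, hGH, hH⟩ := Finite.exists_le_maximal (p := fun H : SimpleGraph V =>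
    ∀ l, HasCycle H l → l < min (Fintype.card V) (K.card + d)) hcyc
  obtain ⟨L, hKL, hL⟩ := Finite.exists_le_maximal (p := fun L : Finset V => H.IsClique L)
    (hK.mono hGH)
  have hpath : ∀ f ∉ L, ∃ z, ∃ l ≥ min (Fintype.card V) (K.card + d), IsPathFrom H L z l ∧
      z (l - 1) = f := fun f hf => by
    obtain ⟨a, ha, hadj⟩ := exists_not_adj_of_maximal_isClique hL hf
    obtain ⟨z, l, hl, hz, hz0, hzl⟩ :=
      exists_isPathSeq_of_maximal hH (ne_of_mem_of_not_mem ha hf) hadj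
    exact ⟨z, l, hl, ⟨hz, hz0 ▸ ha⟩, hzl⟩
  obtain ⟨f, hf⟩ : ∃ f, f ∉ L := by
    by_contra! hc
    have := hH.prop _ (hasCycle_card_of_isClique_univ hn
      (hL.prop.subset fun a _ => hc a))
    omega
  obtain ⟨z, l, hl, hz, -⟩ := hpath f hf
  have hln := hz.length_le_card
  obtain ⟨m, hlm, hmn, ⟨x, hx⟩, hmax⟩ := exists_greatest_lt (b := Fintype.card V + 1)
    (P := fun l => ∃ z, IsPathFrom H L z l) (by omega) ⟨z, hz⟩
  have hshort : ShortCycles H L K.card d m :=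
    ⟨hL.prop, Finset.card_le_card hKL, hK2,
      fun v => (hdeg v).trans (Set.ncard_le_ncard fun z hz => hGH hz), by omega,
      fun k hk => by have := hH.prop k hk; omega, fun k hk => by have := hH.prop k hk; omega,
      fun y k hy => by
        have := hy.length_le_card
        by_contra hc
        exact hmax k (by omega) (by omega) ⟨y, hy⟩,
      h2c.mono hGH⟩
  obtain rfl : K = L := Finset.eq_of_subset_of_card_le hKL (hshort.card_eq hx).le
  exact ⟨H, hGH, m, hshort, ⟨x, hx⟩, hpath⟩

theorem HasBlocks.of_le (hH : HasBlocks H K d u v) (hGH : G ≤ H)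
    (hdeg : ∀ v, d ≤ (G.neighborSet v).ncard) : HasBlocks G K d u v := by
  classical
  refine { hH with exists_block := fun f hf => ?_ }
  obtain ⟨W, hW, hfW⟩ := hH.exists_block f hf
  refine ⟨W, ⟨hW.card, hW.not_mem, fun g hg z => ?_⟩, hfW⟩
  rw [← hW.adj_iff g hg z]
  refine adj_iff_adj_of_ncard_le hGH (hdeg g) ?_ z
  have hd := hH.three_le
  calc (H.neighborSet g).ncard
      ≤ ((insert u (insert v (W.erase g)) : Finset V) : Set V).ncard := by
        refine Set.ncard_le_ncard fun z hz => ?_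
        have := (hW.adj_iff g hg z).1 hz
        simp only [Finset.mem_coe, Finset.mem_insert, Finset.mem_erase]
        tauto
    _ = (insert u (insert v (W.erase g))).card := Set.ncard_coe_finset _
    _ ≤ (W.erase g).card + 1 + 1 :=
        (Finset.card_insert_le ..).trans (Nat.succ_le_succ (Finset.card_insert_le ..))
    _ = d := by
        rw [Finset.card_erase_of_mem hg, hW.card]
        omega

theorem TwoConnected.exists_common_nbrs_or_hasBlocks (h2c : TwoConnected G) (hK : G.IsClique K)
    (hK2 : 2 ≤ K.card) (hd : 1 ≤ d) (hdeg : ∀ v, d ≤ (G.neighborSet v).ncard)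
    (hcyc : ∀ l, HasCycle G l → l < min (Fintype.card V) (K.card + d)) :
    (∃ B ⊆ K, B.card = d ∧ ∀ f ∉ K, ∀ z, G.Adj f z ↔ z ∈ B) ∨ ∃ u v, HasBlocks G K d u v := by
  obtain ⟨H, hGH, m, hshort, ⟨x, hx⟩, hpath⟩ := exists_shortCycles h2c hK hK2 hd hdeg hcyc
  obtain ⟨p, q, hpq⟩ := hshort.exists_crossing hx
  have htight := (hpq.tight hshort hx).1
  have hle := hpq.add_two_le hshort hx
  have hmn := hx.length_le_card
  rcases eq_or_lt_of_le (show K.card + d ≤ m by have := hpq.lt_length; omega) with hm | hm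
  · left
    obtain ⟨B, hBK, hBd, hadj⟩ := hshort.exists_common_nbrs hm.symm (fun f hf => by
      obtain ⟨z, l, hl, hz, hzl⟩ := hpath f hf
      have := hshort.longest z l hz
      obtain rfl : l = m := by omega
      exact ⟨z, hz, hzl⟩) hx
    refine ⟨B, hBK, hBd, fun f hf z => ?_⟩
    rw [← hadj f hf z]
    refine adj_iff_adj_of_ncard_le hGH (hdeg f) (hBd ▸ ?_) z
    rw [show H.neighborSet f = B from Set.ext (hadj f hf), Set.ncard_coe_finset]
  · obtain ⟨u, v, huv⟩ := hshort.exists_hasBlocks hm hx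
    exact Or.inr ⟨u, v, huv.of_le hGH hdeg⟩

end Structure

section Equivalences

theorem exists_equiv_of_ncard_fiber_eq {V W ι : Type*} [Finite V] [Finite W] (c : V → ι)
    (c' : W → ι) (hc : ∀ i, {a | c a = i}.ncard = {b | c' b = i}.ncard) :
    ∃ e : V ≃ W, ∀ a, c' (e a) = c a := by
  have hfiber : ∀ i, Nonempty ({a // c a = i} ≃ {b // c' b = i}) := fun i =>
    Finite.card_eq.1 (hc i)
  exact ⟨Equiv.ofFiberEquiv fun i => (hfiber i).some, Equiv.ofFiberEquiv_map _⟩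

theorem exists_equiv_of_layers {V W ι : Type*} [Finite V] [Finite W] {S T : Set V} {S' T' : Set W}
    (hST : S ⊆ T) (hST' : S' ⊆ T') (hS : S.ncard = S'.ncard) (hT : T.ncard = T'.ncard)
    {g : V → ι} {g' : W → ι}
    (hg : ∀ i, {a | a ∉ T ∧ g a = i}.ncard = {b | b ∉ T' ∧ g' b = i}.ncard) :
    ∃ e : V ≃ W, ∀ a, (e a ∈ S' ↔ a ∈ S) ∧ (e a ∈ T' ↔ a ∈ T) ∧ (a ∉ T → g' (e a) = g a) := by
  classical
  let c : V → Option (Option ι) := fun a =>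
    if a ∈ S then none else if a ∈ T then some none else some (some (g a))
  let c' : W → Option (Option ι) := fun b =>
    if b ∈ S' then none else if b ∈ T' then some none else some (some (g' b))
  obtain ⟨e, he⟩ := exists_equiv_of_ncard_fiber_eq c c' fun i => by
    rcases i with - | - | i
    · rwa [show {a | c a = none} = S by grind, show {b | c' b = none} = S' by grind]
    · rw [show {a | c a = some none} = T \ S by grind,
        show {b | c' b = some none} = T' \ S' by grind, Set.ncard_sdiff hST, Set.ncard_sdiff hST',
        hS, hT]
    · rw [show {a | c a = some (some i)} = {a | a ∉ T ∧ g a = i} by ext; grind,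
        show {b | c' b = some (some i)} = {b | b ∉ T' ∧ g' b = i} by ext; grind, hg]
  exact ⟨e, fun a => by grind⟩

theorem exists_index_of_card_fiber_eq {α β : Type*} [DecidableEq β] {s : Finset α} {f : α → β}
    {k : ℕ} (hf : ∀ a ∈ s, {b ∈ s | f b = f a}.card = k) :
    ∃ (l : ℕ) (idx : α → ℕ), s.card = l * k ∧ (∀ a ∈ s, idx a < l) ∧
      (∀ j < l, {a ∈ s | idx a = j}.card = k) ∧
      ∀ a ∈ s, ∀ b ∈ s, idx a = idx b ↔ f a = f b := by
  rcases s.eq_empty_or_nonempty with rfl | ⟨a, -⟩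
  · exact ⟨0, fun _ => 0, by simp⟩
  have : Nonempty β := ⟨f a⟩
  obtain ⟨φ, hφ⟩ := (s.image f).finite_toSet.exists_bijOn_of_encard_eq
    (t := (Finset.range (s.image f).card : Set ℕ)) (by
      rw [Set.encard_coe_eq_coe_finsetCard, Set.encard_coe_eq_coe_finsetCard, Finset.card_range])
  have himage : ∀ a ∈ s, f a ∈ (s.image f : Set β) := fun a => Finset.mem_image_of_mem f
  have hidx : ∀ a ∈ s, ∀ b ∈ s, φ (f a) = φ (f b) ↔ f a = f b := fun a ha b hb =>
    hφ.injOn.eq_iff (himage a ha) (himage b hb)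
  refine ⟨(s.image f).card, φ ∘ f, ?_, fun a ha => Finset.mem_range.1 (hφ.mapsTo (himage a ha)),
    fun j hj => ?_, hidx⟩
  · rw [Finset.card_eq_sum_card_image f, Finset.sum_const_nat (m := k)]
    exact Finset.forall_mem_image.2 hf
  · obtain ⟨b, hb, rfl⟩ := hφ.surjOn (Finset.mem_coe.2 (Finset.mem_range.2 hj))
    obtain ⟨a, ha, rfl⟩ := Finset.mem_image.1 hb
    rw [← hf a ha]
    exact congrArg _ (Finset.filter_congr fun b hb => hidx b hb a ha)

theorem ncard_fin_le_and_lt {n a b : ℕ} (hb : b ≤ n) :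
    {x : Fin n | a ≤ (x : ℕ) ∧ (x : ℕ) < b}.ncard = b - a := by
  rw [← Nat.card_Ico, ← Set.ncard_coe_finset, ← Set.ncard_image_of_injective _ Fin.val_injective]
  congr 1
  ext i
  simp only [Set.mem_image, Set.mem_ofPred_eq, Finset.coe_Ico, Set.mem_Ico]
  exact ⟨fun ⟨_, hx, hxi⟩ => hxi ▸ hx, fun hi => ⟨⟨i, by omega⟩, hi, rfl⟩⟩

theorem ncard_fin_lt {n b : ℕ} (hb : b ≤ n) : {x : Fin n | (x : ℕ) < b}.ncard = b := by
  simpa using ncard_fin_le_and_lt (a := 0) hb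

end Equivalences

section ExtremalGraphs

variable {V : Type*} [Fintype V] {G : SimpleGraph V} {K B W : Finset V} {n d : ℕ} {u v f : V}

theorem Hgraph_adj {w : ℕ} (hdw : d ≤ w) (x y : Fin n) :
    (Hgraph n (w + d) d).Adj x y ↔ x ≠ y ∧ ((w - d ≤ (x : ℕ) ∧ (x : ℕ) < w) ∨
      (w - d ≤ (y : ℕ) ∧ (y : ℕ) < w) ∨ (x : ℕ) < w ∧ (y : ℕ) < w) := by
  rw [Hgraph, fromRel_adj]
  omega

theorem nonempty_iso_Hgraph (hn : Fintype.card V = n) (hK : G.IsClique K) (hB : B ⊆ K)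
    (hBd : B.card = d) (hadj : ∀ f ∉ K, ∀ z, G.Adj f z ↔ z ∈ B) :
    Nonempty (G ≃g Hgraph n (K.card + d) d) := by
  have hdK : d ≤ K.card := hBd ▸ Finset.card_le_card hB
  have hKn : K.card ≤ n := hn ▸ Finset.card_le_univ K
  have hGadj : ∀ a b, G.Adj a b ↔ a ≠ b ∧ (a ∈ B ∨ b ∈ B ∨ a ∈ K ∧ b ∈ K) := fun a b => by
    have := @hK a
    have := G.adj_comm a b
    grind [SimpleGraph.Adj.ne]
  have hcompl : {a | a ∉ (K : Set V)}.ncard = {x : Fin n | ¬ (x : ℕ) < K.card}.ncard := by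
    have hV := Set.ncard_compl (K : Set V)
    have hFin := Set.ncard_compl {x : Fin n | (x : ℕ) < K.card}
    rw [ncard_fin_lt hKn, Nat.card_fin] at hFin
    rw [Set.ncard_coe_finset, Nat.card_eq_fintype_card, hn, ← hFin] at hV
    exact hV
  obtain ⟨e, he⟩ := exists_equiv_of_layers (S := (B : Set V)) (T := (K : Set V))
    (S' := {x : Fin n | K.card - d ≤ (x : ℕ) ∧ (x : ℕ) < K.card})
    (T' := {x : Fin n | (x : ℕ) < K.card}) (g := fun _ => ()) (g' := fun _ => ())
    (Finset.coe_subset.2 hB) (fun _ hx => hx.2)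
    (by rw [Set.ncard_coe_finset, ncard_fin_le_and_lt hKn]; omega)
    (by rw [Set.ncard_coe_finset, ncard_fin_lt hKn])
    (fun _ => by simpa using hcompl)
  refine ⟨e, fun {a b} => ?_⟩
  simp only [Set.mem_ofPred_eq, Finset.mem_coe] at he
  rw [Hgraph_adj hdK, hGadj, e.injective.ne_iff, (he a).1, (he b).1, (he a).2.1, (he b).2.1]

/-- For a vertex `f ∉ K` of a graph made of blocks attached to two vertices of `K`, the block
containing `f`. -/
def blockOf (G : SimpleGraph V) (K : Finset V) (f : V) : Set V :=
  insert f (G.neighborSet f) \ K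

theorem HasBlocks.blockOf_eq (h : HasBlocks G K d u v) (hW : IsBlock G K d u v W) (hf : f ∈ W) :
    blockOf G K f = W := by
  have := h.left_mem
  have := h.right_mem
  ext z
  have := hW.adj_iff f hf z
  have := hW.not_mem z
  simp only [blockOf, Set.mem_sdiff, Set.mem_insert_iff, mem_neighborSet, Finset.mem_coe]
  grind

theorem HasBlocks.blockOf_eq_iff (h : HasBlocks G K d u v) (hW : IsBlock G K d u v W)
    (hf : f ∈ W) (g : V) : g ∉ K ∧ blockOf G K g = blockOf G K f ↔ g ∈ W := by
  refine ⟨fun ⟨hg, heq⟩ => ?_, fun hg => ⟨hW.not_mem g hg, ?_⟩⟩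
  · rw [← Finset.mem_coe, ← h.blockOf_eq hW hf, ← heq]
    exact ⟨Set.mem_insert g _, hg⟩
  · rw [h.blockOf_eq hW hf, h.blockOf_eq hW hg]

theorem HasBlocks.exists_index (h : HasBlocks G K d u v) :
    ∃ (l : ℕ) (idx : V → ℕ), Fintype.card V = K.card + l * (d - 1) ∧ (∀ f ∉ K, idx f < l) ∧
      (∀ j < l, {f | f ∉ K ∧ idx f = j}.ncard = d - 1) ∧
      ∀ f ∉ K, ∀ z, G.Adj f z ↔ z ≠ f ∧ (z = u ∨ z = v ∨ z ∉ K ∧ idx z = idx f) := by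
  classical
  obtain ⟨l, idx, hcard, hlt, hfiber, hidx⟩ := exists_index_of_card_fiber_eq (s := Kᶜ)
    (f := blockOf G K) (k := d - 1) fun f hf => by
      obtain ⟨W, hW, hfW⟩ := h.exists_block f (Finset.mem_compl.1 hf)
      rw [← hW.card]
      congr 1
      ext g
      rw [Finset.mem_filter, Finset.mem_compl, h.blockOf_eq_iff hW hfW]
  simp only [Finset.mem_compl] at hlt hidx
  refine ⟨l, idx, ?_, hlt, fun j hj => ?_, fun f hf z => ?_⟩
  · rw [← hcard, Finset.card_add_card_compl]
  · rw [← hfiber j hj, ← Set.ncard_coe_finset]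
    simp
  · obtain ⟨W, hW, hfW⟩ := h.exists_block f hf
    rw [hW.adj_iff f hfW, ← h.blockOf_eq_iff hW hfW, and_congr_right fun hz => hidx z hz f hf]

theorem Zgraph_adj {w : ℕ} (x y : Fin n) :
    (Zgraph n (w + d) d).Adj x y ↔ x ≠ y ∧ ((x : ℕ) < 2 ∨ (y : ℕ) < 2 ∨
      ((x : ℕ) < w ∧ (y : ℕ) < w) ∨ ¬ (x : ℕ) < w ∧ ¬ (y : ℕ) < w ∧
        ((x : ℕ) - w) / (d - 1) = ((y : ℕ) - w) / (d - 1)) := by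
  rw [Zgraph, fromRel_adj, Nat.add_sub_cancel]
  omega

theorem ncard_fin_sub_div_eq {w l j : ℕ} (hn : n = w + l * d) (hd : 0 < d) (hj : j < l) :
    {x : Fin n | ¬ (x : ℕ) < w ∧ ((x : ℕ) - w) / d = j}.ncard = d := by
  have hle : (j + 1) * d ≤ l * d := Nat.mul_le_mul_right d hj
  rw [Nat.succ_mul] at hle
  have hset : {x : Fin n | ¬ (x : ℕ) < w ∧ ((x : ℕ) - w) / d = j} =
      {x : Fin n | w + j * d ≤ (x : ℕ) ∧ (x : ℕ) < w + j * d + d} := by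
    ext x
    have := Nat.div_eq_iff (x := x - w) (y := j) hd
    simp only [Set.mem_ofPred_eq]
    omega
  rw [hset, ncard_fin_le_and_lt (by omega), Nat.add_sub_cancel_left]

theorem HasBlocks.nonempty_iso_Zgraph (h : HasBlocks G K d u v) (hn : Fintype.card V = n)
    (hK : G.IsClique K) :
    ∃ l, 2 ≤ l ∧ n = K.card + l * (d - 1) ∧ Nonempty (G ≃g Zgraph n (K.card + d) d) := by
  classical
  have hd := h.three_le
  have hu := h.left_mem
  have hv := h.right_mem
  have hsub : {u, v} ⊆ K := Finset.insert_subset hu (Finset.singleton_subset_iff.2 hv)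
  have hK2 : 2 ≤ K.card := Finset.card_pair h.ne ▸ Finset.card_le_card hsub
  obtain ⟨l, idx, hcard, hlt, hfiber, hadj⟩ := h.exists_index
  have hle := h.card_le
  rw [hn] at hcard hle
  have hl : 2 ≤ l := Nat.le_of_mul_le_mul_right (c := d - 1) (by omega) (by omega)
  have hGadj : ∀ a b, G.Adj a b ↔ a ≠ b ∧ (a ∈ ({u, v} : Finset V) ∨ b ∈ ({u, v} : Finset V) ∨
      (a ∈ K ∧ b ∈ K) ∨ a ∉ K ∧ b ∉ K ∧ idx a = idx b) := fun a b => by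
    have := @hK a
    have := G.adj_comm a b
    grind [SimpleGraph.Adj.ne]
  obtain ⟨e, he⟩ := exists_equiv_of_layers (S := (({u, v} : Finset V) : Set V)) (T := (K : Set V))
    (S' := {x : Fin n | (x : ℕ) < 2}) (T' := {x : Fin n | (x : ℕ) < K.card}) (g := idx)
    (g' := fun x => ((x : ℕ) - K.card) / (d - 1))
    (Finset.coe_subset.2 hsub) (fun _ hx => lt_of_lt_of_le hx hK2)
    (by rw [Set.ncard_coe_finset, Finset.card_pair h.ne, ncard_fin_lt (by omega)])
    (by rw [Set.ncard_coe_finset, ncard_fin_lt (by omega)])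
    (fun j => by
      rcases lt_or_ge j l with hj | hj
      · exact (hfiber j hj).trans (ncard_fin_sub_div_eq hcard (by omega) hj).symm
      · have hdiv : ∀ x : Fin n, ((x : ℕ) - K.card) / (d - 1) < l := fun x =>
          (Nat.div_lt_iff_lt_mul (by omega)).2 (by omega)
        rw [show {a | a ∉ (K : Set V) ∧ idx a = j} = ∅ by grind,
          show {x : Fin n | x ∉ {x : Fin n | (x : ℕ) < K.card} ∧
            ((x : ℕ) - K.card) / (d - 1) = j} = ∅ by grind, Set.ncard_empty, Set.ncard_empty])
  refine ⟨l, hl, hcard, ⟨e, fun {a b} => ?_⟩⟩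
  simp only [Set.mem_ofPred_eq, Finset.mem_coe] at he
  rw [Zgraph_adj, hGadj, e.injective.ne_iff, (he a).1, (he b).1, (he a).2.1, (he b).2.1]
  grind

end ExtremalGraphs

section Circumference

variable {V : Type*} {G : SimpleGraph V} {l : ℕ}

theorem fin_eq_add_one_or_of_sub_eq_one {a b : Fin l} (h : ((b - a : Fin l) : ℕ) = 1) :
    (a : ℕ) + 1 = b ∨ (a : ℕ) + 1 = l ∧ (b : ℕ) = 0 := by
  rw [Fin.val_sub] at h
  rcases lt_or_ge (l - a + b : ℕ) l with hb | hb
  · rw [Nat.mod_eq_of_lt hb] at h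
    omega
  · rw [Nat.mod_eq_sub_mod hb, Nat.mod_eq_of_lt (by omega)] at h
    omega

theorem HasCycle.cycleGraph_isContained (h : HasCycle G l) : cycleGraph l ⊑ G := by
  obtain ⟨c, hc⟩ := h
  have hstep : ∀ a b : Fin l, ((b - a : Fin l) : ℕ) = 1 → G.Adj (c a) (c b) := fun a b hab => by
    rcases fin_eq_add_one_or_of_sub_eq_one hab with hb | ⟨ha, hb⟩
    · exact hc.adj_of_succ_eq b.2 hb
    · rw [hb, ← Nat.add_sub_cancel (a : ℕ) 1, ha]
      exact hc.closes
  exact ⟨⟨⟨fun i => c i, fun {a b} hab => (cycleGraph_adj'.1 hab).elim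
    (fun h => (hstep b a h).symm) (hstep a b)⟩, fun a b hab => Fin.ext (hc.inj a.2 b.2 hab)⟩⟩

theorem le_natCard_of_cycleGraph_isContained [Finite V] (h : cycleGraph l ⊑ G) :
    l ≤ Nat.card V := by
  obtain ⟨f⟩ := h
  simpa using Nat.card_le_card_of_injective f f.injective

theorem HasCycle.le_circumference [Finite V] (h : HasCycle G l) : l ≤ circumference G := by
  have hl : 2 < l := h.elim fun _ hc => hc.three_le
  refine le_csSup ⟨Nat.card V, ?_⟩ ((cycleGraph_isContained_iff hl).1 h.cycleGraph_isContained)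
  rintro _ ⟨v, p, hp, rfl⟩
  exact le_natCard_of_cycleGraph_isContained
    ((cycleGraph_isContained_iff hp.three_le_length).2 ⟨v, p, hp, rfl⟩)

end Circumference

section MinDegree

variable {V : Type*} [Fintype V] {G : SimpleGraph V}

theorem minDeg_eq_minDegree (G : SimpleGraph V) [DecidableRel G.Adj] :
    minDeg G = G.minDegree := by
  unfold minDeg
  congr!

theorem minDeg_le_ncard_neighborSet (v : V) : minDeg G ≤ (G.neighborSet v).ncard := by
  classical
  rw [minDeg_eq_minDegree, Set.ncard_eq_toFinset_card']
  exact G.minDegree_le_degree v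

namespace TwoConnected

theorem nontrivial (h : TwoConnected G) : Nontrivial V :=
  Fintype.one_lt_card_iff_nontrivial.1 (by have := h.1; omega)

theorem preconnected (h : TwoConnected G) : G.Preconnected := fun a b => by
  classical
  obtain ⟨v, hv⟩ := Finset.exists_mem_notMem_of_card_lt_card
    (show ({a, b} : Finset V).card < Finset.univ.card from
      Finset.card_le_two.trans_lt (Finset.card_univ (α := V) ▸ h.1))
  simp only [Finset.mem_insert, Finset.mem_singleton, not_or] at hv
  exact ((h.2 v).preconnected ⟨a, Ne.symm hv.2.1⟩ ⟨b, Ne.symm hv.2.2⟩).map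
    (Embedding.induce _).toHom

theorem minDeg_pos (h : TwoConnected G) : 0 < minDeg G := by
  classical
  have := h.nontrivial
  rw [minDeg_eq_minDegree]
  exact h.preconnected.minDegree_pos_of_nontrivial

theorem two_le_cliqueNum (h : TwoConnected G) : 2 ≤ G.cliqueNum := by
  classical
  have := h.nontrivial
  obtain ⟨a⟩ : Nonempty V := inferInstance
  obtain ⟨b, hab⟩ := h.preconnected.exists_adj_of_nontrivial a
  rw [← Finset.card_pair hab.ne]
  exact IsClique.card_le_cliqueNum (tc := by simpa using fun _ => hab)

end TwoConnected

end MinDegree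

theorem circumference_cliqueNum_minDegree_general {V : Type*} [Fintype V] {n : ℕ}
    (hn : Fintype.card V = n) (G : SimpleGraph V) (h2c : TwoConnected G) :
    min n (G.cliqueNum + minDeg G) ≤ circumference G ∨
    Nonempty (G ≃g Hgraph n (G.cliqueNum + minDeg G) (minDeg G)) ∨
    (∃ ℓ, 2 ≤ ℓ ∧
      n = (G.cliqueNum + minDeg G - minDeg G - 2) + ℓ * (minDeg G - 1) + 2 ∧
      Nonempty (G ≃g Zgraph n (G.cliqueNum + minDeg G) (minDeg G))) := by
  refine or_iff_not_imp_left.2 fun hlt => ?_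
  obtain ⟨K, hK, hKcard⟩ := G.exists_isNClique_cliqueNum
  have hω := h2c.two_le_cliqueNum
  rw [← hKcard] at hlt hω ⊢
  rcases h2c.exists_common_nbrs_or_hasBlocks hK hω h2c.minDeg_pos minDeg_le_ncard_neighborSet
    (fun l hl => hn ▸ hl.le_circumference.trans_lt (not_le.1 hlt)) with
    ⟨B, hBK, hBcard, hadj⟩ | ⟨u, v, huv⟩
  · exact Or.inl (nonempty_iso_Hgraph hn hK hBK hBcard hadj)
  · obtain ⟨l, hl, hln, hiso⟩ := huv.nonempty_iso_Zgraph hn hK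
    exact Or.inr ⟨l, hl, by omega, hiso⟩

/-- Let `G` be a 2-connected graph on `n` vertices. Then
`c(G) ≥ min{n, ω(G) + δ(G)}`, unless `G` is isomorphic to `H(n, ω(G)+δ(G), δ(G))`
or to `Z(n, ω(G)+δ(G), δ(G))`. -/
theorem circumference_cliqueNum_minDegree {n : ℕ} (G : SimpleGraph (Fin n))
    (h2c : TwoConnected G) :
    min n (G.cliqueNum + minDeg G) ≤ circumference G ∨
    Nonempty (G ≃g Hgraph n (G.cliqueNum + minDeg G) (minDeg G)) ∨
    (∃ ℓ, 2 ≤ ℓ ∧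
      n = (G.cliqueNum + minDeg G - minDeg G - 2) + ℓ * (minDeg G - 1) + 2 ∧
      Nonempty (G ≃g Zgraph n (G.cliqueNum + minDeg G) (minDeg G))) :=
  circumference_cliqueNum_minDegree_general (Fintype.card_fin n) G h2c
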